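/- arXiv:1607.08496 — 6 statements merged into one kernel-verified Lean document; each statement's English description precedes it below -/
import Mathlib

section
/- For every connected finite simple graph G on n ≥ 3 vertices, the connected set polynomial C(G;x) has a nonreal complex root; that is, there exists z ∈ ℂ with z ∉ ℝ such that Σ_{k=1}^n c_k z^k = 0. -/
open scoped Classical

/-- The number of connected sets (nonempty vertex subsets inducing a connected
subgraph) of order `k` in the finite simple graph `G`. -/
noncomputable def connCount {V : Type*} [Fintype V] (G : SimpleGraph V) (k : ℕ) : ℕ :=
  (Finset.univ.filter fun S : Finset V =>
    S.card = k ∧ (G.induce (S : Set V)).Connected).card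

/-- The connected set polynomial `C(G;x) = ∑_{k=1}^n c_k x^k`, at a complex argument. -/
noncomputable def connPoly {V : Type*} [Fintype V] (G : SimpleGraph V) (x : ℂ) : ℂ :=
  ∑ k ∈ Finset.Icc 1 (Fintype.card V), (connCount G k : ℂ) * x ^ k

lemma prod_le_exp_aux (s : Multiset ℝ) (h : ∀ r ∈ s, 0 ≤ r) :
    0 ≤ s.prod ∧ s.prod ≤ Real.exp (s.sum - s.card) := by
  induction s using Multiset.induction with
  | empty => simp
  | cons a s ih =>
    have ha : 0 ≤ a := h a (by simp)
    obtain ⟨h0, h1⟩ := ih (fun r hr => h r (by simp [hr]))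
    have h2 : a ≤ Real.exp (a - 1) := by
      have := Real.add_one_le_exp (a - 1); linarith
    refine ⟨by rw [Multiset.prod_cons]; positivity, ?_⟩
    rw [Multiset.prod_cons]
    calc a * s.prod ≤ Real.exp (a - 1) * Real.exp (s.sum - s.card) := by gcongr
      _ = _ := by
        rw [← Real.exp_add]; congr 1
        rw [Multiset.sum_cons, Multiset.card_cons]; push_cast; ring

lemma connCount_one_aux {V : Type*} [Fintype V] (G : SimpleGraph V) :
    connCount G 1 = Fintype.card V := by
  have : (Finset.univ.filter fun S : Finset V =>
      S.card = 1 ∧ (G.induce (S : Set V)).Connected) = Finset.powersetCard 1 Finset.univ := by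
    ext S
    simp only [Finset.mem_filter, Finset.mem_univ, true_and, Finset.mem_powersetCard,
      Finset.subset_univ, and_iff_left_iff_imp]
    intro hS
    obtain ⟨v, rfl⟩ := Finset.card_eq_one.1 hS
    have : Nonempty ↥((({v} : Finset V) : Set V)) := ⟨⟨v, by simp⟩⟩
    have : Subsingleton ↥((({v} : Finset V) : Set V)) := by
      constructor
      rintro ⟨a, ha⟩ ⟨b, hb⟩
      simp at ha hb
      simp [ha, hb]
    exact { preconnected := SimpleGraph.Preconnected.of_subsingleton }
  unfold connCount
  rw [this, Finset.card_powersetCard, Nat.choose_one_right, Finset.card_univ]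

lemma connCount_top_aux {V : Type*} [Fintype V] (G : SimpleGraph V) (hG : G.Connected) :
    connCount G (Fintype.card V) = 1 := by
  unfold connCount
  rw [Finset.card_eq_one]
  refine ⟨Finset.univ, ?_⟩
  ext S
  simp only [Finset.mem_filter, Finset.mem_univ, true_and, Finset.mem_singleton,
    Finset.card_eq_iff_eq_univ]
  constructor
  · exact fun h => h.1
  · rintro rfl
    refine ⟨rfl, ?_⟩
    rw [Finset.coe_univ]
    exact (SimpleGraph.induceUnivIso G).connected_iff.2 hG

lemma connCount_le_aux {V : Type*} [Fintype V] (G : SimpleGraph V) (k : ℕ) :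
    connCount G k ≤ (Fintype.card V).choose k := by
  unfold connCount
  rw [← Finset.card_univ, ← Finset.card_powersetCard]
  apply Finset.card_le_card
  intro S
  simp only [Finset.mem_filter, Finset.mem_powersetCard]
  exact fun h => ⟨Finset.subset_univ _, h.2.1⟩

open Polynomial in
/-- For every connected finite simple graph on at least 3 vertices, the connected set
polynomial has a nonreal complex root. -/
theorem connPoly_has_nonreal_root {V : Type*} [Fintype V] (G : SimpleGraph V)
    (hG : G.Connected) (hn : 3 ≤ Fintype.card V) :
    ∃ z : ℂ, z.im ≠ 0 ∧ connPoly G z = 0 := by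
  by_contra! hcon
  obtain ⟨d, hd⟩ : ∃ d, Fintype.card V = d + 2 := ⟨Fintype.card V - 2, by omega⟩
  set P : ℂ[X] := ∑ k ∈ Finset.range (d + 2), C (connCount G (k + 1) : ℂ) * X ^ k with hP
  have hcoeff : ∀ k, k < d + 2 → P.coeff k = connCount G (k + 1) := by
    intro k hk
    simp [hP, Polynomial.finsetSum_coeff, Polynomial.coeff_X_pow, hk]
  have heval : ∀ z, P.eval z = ∑ k ∈ Finset.range (d + 2), (connCount G (k + 1) : ℂ) * z ^ k := by
    intro z; simp [hP, Polynomial.eval_finsetSum]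
  have hconn : ∀ z, connPoly G z = z * P.eval z := by
    intro z
    rw [heval, connPoly, hd, Finset.mul_sum, Finset.range_eq_Ico, ← Finset.Ico_add_one_right_eq_Icc,
      Finset.sum_Ico_eq_sum_range, Finset.range_eq_Ico]
    refine Finset.sum_congr (by simp) fun k _ => ?_
    rw [add_comm 1 k]; ring
  have htop : connCount G (d + 2) = 1 := hd ▸ connCount_top_aux G hG
  have hone : connCount G 1 = d + 2 := hd ▸ connCount_one_aux G
  have hle : connCount G (d + 1) ≤ d + 2 := by
    have := connCount_le_aux G (d + 1)
    rw [hd] at this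
    rwa [show d + 2 = (d + 1) + 1 from rfl, Nat.choose_succ_self_right] at this
  have hdeg_le : P.natDegree ≤ d + 1 := by
    refine Polynomial.natDegree_sum_le_of_forall_le _ _ fun k hk => ?_
    refine (Polynomial.natDegree_C_mul_X_pow_le _ _).trans ?_
    have := Finset.mem_range.1 hk
    omega
  have hlead : P.coeff (d + 1) = 1 := by rw [hcoeff _ (by omega), htop]; simp
  have hmonic : P.Monic := Polynomial.monic_of_natDegree_le_of_coeff_eq_one _ hdeg_le hlead
  have hdeg : P.natDegree = d + 1 :=
    le_antisymm hdeg_le (Polynomial.le_natDegree_of_ne_zero (by rw [hlead]; exact one_ne_zero))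
  have hsplit : P.Splits := IsAlgClosed.splits P
  have hroot : ∀ z ∈ P.roots, P.eval z = 0 := fun z hz => Polynomial.isRoot_of_mem_roots hz
  have him : ∀ z ∈ P.roots, z.im = 0 := by
    intro z hz
    by_contra hne
    exact hcon z hne (by rw [hconn, hroot z hz, mul_zero])
  set t : Multiset ℝ := P.roots.map fun z => -z.re with ht
  have hnonneg : ∀ r ∈ t, 0 ≤ r := by
    intro r hr
    obtain ⟨z, hz, rfl⟩ := Multiset.mem_map.1 hr
    by_contra hneg
    have hzr : z = ((z.re : ℝ) : ℂ) := Complex.ext (by simp) (by simp [him z hz])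
    have h0 := hroot z hz
    rw [hzr, heval] at h0
    have h1 : ∑ k ∈ Finset.range (d + 2), (connCount G (k + 1) : ℝ) * z.re ^ k = 0 := by
      exact_mod_cast h0
    rw [Finset.sum_eq_zero_iff_of_nonneg] at h1
    · have := h1 0 (by simp)
      rw [zero_add, hone] at this
      simp at this
      norm_cast at this
    · intro k _
      have : 0 ≤ z.re := by linarith
      positivity
  have hcard : t.card = d + 1 := by
    rw [ht, Multiset.card_map, ← hdeg]
    exact hsplit.natDegree_eq_card_roots.symm
  have hsum : t.sum = connCount G (d + 1) := by
    have h := hsplit.nextCoeff_eq_neg_sum_roots_of_monic hmonic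
    rw [Polynomial.nextCoeff_of_natDegree_pos (by omega), hdeg, Nat.add_sub_cancel,
      hcoeff d (by omega)] at h
    have h' := congrArg Complex.reAddGroupHom h
    rw [map_neg, map_multiset_sum] at h'
    rw [ht, Multiset.sum_map_neg]
    simpa using h'.symm
  have hprod : t.prod = d + 2 := by
    have h := hsplit.eval_eq_prod_roots_of_monic hmonic 0
    rw [← Polynomial.coeff_zero_eq_eval_zero, hcoeff 0 (by omega), zero_add, hone] at h
    have h2 : ((t.prod : ℝ) : ℂ) = (P.roots.map fun z => 0 - z).prod := by
      rw [← Complex.ofRealHom_eq_coe, map_multiset_prod, ht, Multiset.map_map]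
      refine congrArg _ (Multiset.map_congr rfl fun z hz => ?_)
      apply Complex.ext <;> simp [him z hz]
    rw [← h] at h2
    exact_mod_cast h2
  have key := (prod_le_exp_aux t hnonneg).2
  rw [hsum, hprod, hcard] at key
  have h1 : Real.exp ((connCount G (d + 1) : ℝ) - ((d + 1 : ℕ) : ℝ)) ≤ Real.exp 1 := by
    apply Real.exp_le_exp.2
    have : (connCount G (d + 1) : ℝ) ≤ ((d + 2 : ℕ) : ℝ) := by exact_mod_cast hle
    push_cast at this ⊢
    linarith
  have h2 := Real.exp_one_lt_d9
  have h3 : (1 : ℝ) ≤ d := by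
    have : 1 ≤ d := by omega
    exact_mod_cast this
  linarith
end

section
/- For every integer n ≥ 2, the node reliability polynomial of the cycle graph C_{2n+1} on 2n+1 vertices has a real root in the open interval (2n² − 1, 2n²). In particular, the collection of real roots of node reliability polynomials over all graphs is unbounded. -/
open scoped Classical

/-- The node reliability polynomial of `G` at a real argument `p`: the sum over all
connected sets `S` of `p^|S| * (1-p)^(N-|S|)`. -/
noncomputable def nodeRelR {V : Type*} [Fintype V] (G : SimpleGraph V) (p : ℝ) : ℝ :=
  ∑ S ∈ Finset.univ.filter fun S : Finset V => (G.induce (S : Set V)).Connected,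
    p ^ S.card * (1 - p) ^ (Fintype.card V - S.card)

/-- The arc of length `k` starting at `a`. -/
def cycArc {m : ℕ} (a : Fin (m+2)) (k : ℕ) : Finset (Fin (m+2)) :=
  Finset.univ.filter fun x => (x - a).val < k

lemma mem_cycArc {m : ℕ} (a x : Fin (m+2)) (k : ℕ) : x ∈ cycArc a k ↔ (x - a).val < k := by
  simp [cycArc]

lemma card_cycArc {m : ℕ} (a : Fin (m+2)) (k : ℕ) (hk : k ≤ m + 2) : (cycArc a k).card = k := by
  have : cycArc a k = (Finset.univ.filter fun y : Fin (m+2) => y.val < k).map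
      (Equiv.addRight a).toEmbedding := by
    ext x
    rw [Finset.mem_map_equiv]
    simp [mem_cycArc, sub_eq_add_neg]
  rw [this, Finset.card_map, Fin.card_filter_val_lt]
  omega

lemma val_succ_of_lt {m : ℕ} (y : Fin (m+2)) (h : y.val < m+1) : (y+1).val = y.val+1 := by
  rw [Fin.val_add_one, if_neg]
  intro h'
  rw [h'] at h
  simp at h

lemma neg_one_val {m : ℕ} : (-1 : Fin (m+2)).val = m+1 := by
  have : (-1 : Fin (m+2)) = Fin.last (m+1) := by
    have h : Fin.last (m+1) + 1 = 0 := Fin.last_add_one _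
    exact (eq_neg_of_add_eq_zero_left h).symm
  rw [this]; simp

lemma val_pred {m : ℕ} (y : Fin (m+2)) (h : y ≠ 0) : (y-1).val + 1 = y.val := by
  have h1 : (y-1).val < m+1 := by
    by_contra h2
    have : y - 1 = -1 := by
      apply Fin.ext
      rw [neg_one_val]
      have := (y-1).isLt
      omega
    apply h
    simpa using this
  have := val_succ_of_lt (y-1) h1
  rw [sub_add_cancel] at this
  exact this.symm

lemma arc_connected {m : ℕ} (a : Fin (m+2)) (k : ℕ) (hk : 0 < k) :
    ((SimpleGraph.cycleGraph (m+2)).induce (cycArc a k : Set (Fin (m+2)))).Connected := by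
  have ha : a ∈ (cycArc a k : Set (Fin (m+2))) := by simpa [mem_cycArc] using hk
  have key : ∀ j : ℕ, ∀ x (hx : x ∈ (cycArc a k : Set (Fin (m+2)))), (x - a).val = j →
      ((SimpleGraph.cycleGraph (m+2)).induce (cycArc a k : Set (Fin (m+2)))).Reachable
        ⟨a, ha⟩ ⟨x, hx⟩ := by
    intro j
    induction j with
    | zero =>
      intro x hx h
      have : x = a := by
        have : x - a = 0 := Fin.ext (by simpa using h)
        exact sub_eq_zero.mp this
      subst this
      rfl
    | succ j ih =>
      intro x hx h
      have hne : x - a ≠ 0 := by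
        intro h0; rw [h0] at h; simp at h
      have h1 := val_pred _ hne
      have hx' : (x - a).val < k := by simpa [mem_cycArc] using hx
      have e : x - 1 - a = x - a - 1 := by abel
      have hy : x - 1 ∈ (cycArc a k : Set (Fin (m+2))) := by
        rw [Finset.mem_coe, mem_cycArc, e]; omega
      refine (ih (x-1) hy (by rw [e]; omega)).trans (SimpleGraph.Adj.reachable ?_)
      simp [SimpleGraph.cycleGraph_adj]
  rw [SimpleGraph.connected_iff_exists_forall_reachable]
  exact ⟨⟨a, ha⟩, fun ⟨x, hx⟩ => key _ x hx rfl⟩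

lemma exists_start {m : ℕ} (S : Finset (Fin (m+2))) (hne : S.Nonempty) (hu : S ≠ Finset.univ) :
    ∃ a ∈ S, a - 1 ∉ S := by
  by_contra! h
  obtain ⟨b, hb⟩ := hne
  apply hu
  have key : ∀ j : ℕ, ∀ x, (b - x).val = j → x ∈ S := by
    intro j
    induction j with
    | zero =>
      intro x hx
      have : b - x = 0 := Fin.ext (by simpa using hx)
      rw [← sub_eq_zero.mp this]; exact hb
    | succ j ih =>
      intro x hx
      have hne : b - x ≠ 0 := by
        intro h0; rw [h0] at hx; simp at hx
      have h1 := val_pred _ hne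
      have e : b - (x + 1) = b - x - 1 := by abel
      have := h _ (ih (x+1) (by rw [e]; omega))
      simpa using this
  ext x
  simp [key _ x rfl]

lemma connected_arc {m : ℕ} (S : Finset (Fin (m+2))) (hu : S ≠ Finset.univ)
    (hc : ((SimpleGraph.cycleGraph (m+2)).induce (S : Set (Fin (m+2)))).Connected) :
    ∃ a, ∃ i < m + 1, S = cycArc a (i+1) := by
  have hne : S.Nonempty := by
    obtain ⟨⟨x, hx⟩⟩ := hc.nonempty
    exact ⟨x, hx⟩
  obtain ⟨a, ha, ha1⟩ := exists_start S hne hu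
  have hex : ∃ k : ℕ, ∃ x, x ∉ S ∧ (x - a).val = k := ⟨_, a - 1, ha1, rfl⟩
  obtain ⟨x0, hx0, hk⟩ := Nat.find_spec hex
  have hmin : ∀ x, (x - a).val < Nat.find hex → x ∈ S := by
    intro x hx
    by_contra h
    exact Nat.find_min hex hx ⟨x, h, rfl⟩
  generalize Nat.find hex = k at hk hmin
  have hk0 : k ≠ 0 := by
    intro h
    rw [h] at hk
    have : x0 - a = 0 := Fin.ext (by simpa using hk)
    rw [sub_eq_zero.mp this] at hx0
    exact hx0 ha
  have hk1 : k < m + 2 := by rw [← hk]; exact (x0 - a).isLt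
  refine ⟨a, k - 1, by omega, ?_⟩
  rw [Nat.sub_add_cancel (by omega)]
  have step : ∀ u v : (S : Set (Fin (m+2))),
      ((SimpleGraph.cycleGraph (m+2)).induce (S : Set (Fin (m+2)))).Adj u v →
      (u.1 - a).val < k → (v.1 - a).val < k := by
    rintro ⟨u, hu⟩ ⟨v, hv⟩ huv h
    simp only [SimpleGraph.comap_adj, Function.Embedding.subtype_apply,
      SimpleGraph.cycleGraph_adj] at huv
    simp only at h ⊢
    rcases huv with huv | huv
    · have e : v - a = u - a - 1 := by rw [← huv]; abel
      have h0 : u - a ≠ 0 := by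
        intro h0
        apply ha1
        rw [← sub_eq_zero.mp h0, ← huv]
        simpa using hv
      have := val_pred _ h0
      rw [e]; omega
    · have e : v - a = u - a + 1 := by rw [← huv]; abel
      have h1 := val_succ_of_lt (u - a) (by omega)
      rw [← e] at h1
      by_contra h2
      have : v - a = x0 - a := Fin.ext (by omega)
      have : v = x0 := by simpa using this
      exact hx0 (this ▸ hv)
  have walk : ∀ u v : (S : Set (Fin (m+2))),
      ((SimpleGraph.cycleGraph (m+2)).induce (S : Set (Fin (m+2)))).Walk u v →
      (u.1 - a).val < k → (v.1 - a).val < k := by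
    intro u v w
    induction w with
    | nil => exact id
    | cons h _ ih => exact fun h' => ih (step _ _ h h')
  ext x
  rw [mem_cycArc]
  refine ⟨fun hx => ?_, hmin x⟩
  obtain ⟨w⟩ := hc.preconnected ⟨a, ha⟩ ⟨x, hx⟩
  exact walk _ _ w (by simp; omega)

lemma arc_inj {m : ℕ} (a b : Fin (m+2)) (k : ℕ) (hk : 0 < k) (hk' : k < m+2)
    (h : cycArc a k = cycArc b k) : a = b := by
  by_contra hne
  have h1 : a ∈ cycArc b k := by rw [← h, mem_cycArc]; simpa using hk
  rw [mem_cycArc] at h1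
  have h2 : a - 1 ∈ cycArc b k := by
    rw [mem_cycArc]
    have := val_pred (a - b) (sub_ne_zero.mpr hne)
    have e : a - 1 - b = a - b - 1 := by abel
    rw [e]; omega
  rw [← h, mem_cycArc] at h2
  have e : a - 1 - a = -1 := by abel
  rw [e, neg_one_val] at h2
  omega

lemma nodeRel_cycle (m : ℕ) (p : ℝ) : nodeRelR (SimpleGraph.cycleGraph (m+2)) p =
    p ^ (m+2) + (m+2) * ∑ i ∈ Finset.range (m+1), p ^ (i+1) * (1-p) ^ (m+1-i) := by
  unfold nodeRelR
  have hset : (Finset.univ.filter fun S : Finset (Fin (m+2)) =>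
      ((SimpleGraph.cycleGraph (m+2)).induce (S : Set (Fin (m+2)))).Connected) =
      insert Finset.univ (((Finset.univ : Finset (Fin (m+2))) ×ˢ Finset.range (m+1)).image
        fun q => cycArc q.1 (q.2+1)) := by
    ext S
    simp only [Finset.mem_filter, Finset.mem_univ, true_and, Finset.mem_insert, Finset.mem_image,
      Finset.mem_product, Finset.mem_range, Prod.exists]
    constructor
    · intro hc
      by_cases hu : S = Finset.univ
      · exact Or.inl hu
      · obtain ⟨a, i, hi, h⟩ := connected_arc S hu hc
        exact Or.inr ⟨a, i, hi, h.symm⟩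
    · rintro (h | ⟨a, i, hi, h⟩)
      · have : S = cycArc 0 (m+2) := by
          rw [h]; ext x; rw [mem_cycArc]; simp
        rw [this]
        exact arc_connected _ _ (by omega)
      · rw [← h]
        exact arc_connected _ _ (by omega)
  refine (Finset.sum_congr (s₂ := insert Finset.univ (((Finset.univ : Finset (Fin (m+2))) ×ˢ
    Finset.range (m+1)).image fun q => cycArc q.1 (q.2+1))) (by convert hset)
    (fun _ _ => rfl)).trans ?_
  rw [Finset.sum_insert, Finset.sum_image, Finset.sum_product]
  · have : ∀ a : Fin (m+2), ∑ i ∈ Finset.range (m+1), p ^ (cycArc a (i+1)).card *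
        (1-p) ^ (Fintype.card (Fin (m+2)) - (cycArc a (i+1)).card) =
        ∑ i ∈ Finset.range (m+1), p ^ (i+1) * (1-p) ^ (m+1-i) := by
      intro a
      refine Finset.sum_congr rfl fun i hi => ?_
      rw [Finset.mem_range] at hi
      rw [card_cycArc _ _ (by omega), Fintype.card_fin]
      congr 2
      omega
    rw [Finset.sum_congr rfl fun a _ => this a]
    simp
  · rintro ⟨a, i⟩ h1 ⟨b, j⟩ h2 h
    simp at h1 h2 h
    have hc := congrArg Finset.card h
    rw [card_cycArc _ _ (by omega), card_cycArc _ _ (by omega)] at hc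
    have : i = j := by omega
    subst this
    rw [arc_inj a b (i+1) (by omega) (by omega) h]
  · intro h
    simp only [Finset.mem_image, Finset.mem_product, Finset.mem_range, Prod.exists] at h
    obtain ⟨a, i, hi, h⟩ := h
    have hc := congrArg Finset.card h
    rw [card_cycArc _ _ (by omega)] at hc
    simp at hc
    omega

lemma nodeRel_cycle_mul (m : ℕ) (p : ℝ) : (2*p-1) * nodeRelR (SimpleGraph.cycleGraph (m+2)) p =
    p * (p ^ (m+1) * (2*p-1) - (m+2) * (p-1) * (p^(m+1) - (1-p)^(m+1))) := by
  rw [nodeRel_cycle]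
  have h := geom_sum₂_mul p (1-p) (m+1)
  have e : ∑ i ∈ Finset.range (m+1), p ^ (i+1) * (1-p) ^ (m+1-i) =
      p * (1-p) * ∑ i ∈ Finset.range (m+1), p ^ i * (1-p) ^ (m+1-1-i) := by
    rw [Finset.mul_sum]
    refine Finset.sum_congr rfl fun i hi => ?_
    rw [Finset.mem_range] at hi
    have : m + 1 - i = (m+1-1-i) + 1 := by omega
    rw [this]; ring
  rw [e]
  linear_combination (m+2) * p * (1-p) * h

lemma pow_le2 (x : ℝ) (h0 : 0 ≤ x) (h1 : x ≤ 1) (k : ℕ) :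
    (1-x)^k ≤ 1 - k*x + k*(k-1)/2*x^2 := by
  induction k with
  | zero => simp
  | succ k ih =>
    have hk : (0:ℝ) ≤ k * (k-1) := by
      rcases k with _ | k
      · simp
      · push_cast; ring_nf; positivity
    have := mul_le_mul_of_nonneg_left ih (sub_nonneg.mpr h1)
    have h3 : 0 ≤ (k * (k-1) : ℝ) * x^3 := by positivity
    rw [pow_succ' (1-x)]
    push_cast
    nlinarith

lemma pow_ge3 (x : ℝ) (h0 : 0 ≤ x) (h1 : x ≤ 1) (k : ℕ) :
    1 - k*x + k*(k-1)/2*x^2 - k*(k-1)*(k-2)/6*x^3 ≤ (1-x)^k := by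
  induction k with
  | zero => simp
  | succ k ih =>
    have hk : (0:ℝ) ≤ k * (k-1) * (k-2) := by
      rcases k with _ | _ | k
      · simp
      · simp
      · push_cast; ring_nf; positivity
    have := mul_le_mul_of_nonneg_left ih (sub_nonneg.mpr h1)
    have h3 : 0 ≤ (k * (k-1) * (k-2) : ℝ) * x^4 := by positivity
    rw [pow_succ' (1-x)]
    push_cast
    nlinarith

lemma nodeRel_odd (n : ℕ) (hn : 2 ≤ n) (p : ℝ) (hp : 1 < p) :
    (2*p-1) * nodeRelR (SimpleGraph.cycleGraph (2*n+1)) p =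
    p * p^(2*n) * ((2*p-1) - (2*n+1) * (p-1) * (1 - (1-1/p)^(2*n))) := by
  obtain ⟨m, hm⟩ : ∃ m, 2*n = m+1 := ⟨2*n-1, by omega⟩
  have h := nodeRel_cycle_mul m p
  have e1 : (1 - p)^(m+1) = (p-1)^(m+1) := by
    rw [← hm, pow_mul, pow_mul]; congr 1; ring
  have e2 : (p-1)^(m+1) = p^(m+1) * (1-1/p)^(m+1) := by
    rw [← mul_pow]; congr 1; field_simp
  have hmr : (2*n:ℝ) = m+1 := by exact_mod_cast hm
  rw [e1, e2] at h
  rw [hm, hmr, h]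
  ring

lemma sign_hi (n : ℕ) (hn : 2 ≤ n) :
    0 < nodeRelR (SimpleGraph.cycleGraph (2*n+1)) (2*(n:ℝ)^2) := by
  have hn' : (2:ℝ) ≤ n := by exact_mod_cast hn
  set p : ℝ := 2*(n:ℝ)^2 with hp
  have hp1 : 1 < p := by nlinarith
  have h := nodeRel_odd n hn p hp1
  have hx1 : 1/p ≤ 1 := by rw [div_le_one (by linarith)]; linarith
  have hb := pow_ge3 (1/p) (by positivity) hx1 (2*n)
  push_cast at hb
  have : 0 < (2*p-1) - (2*n+1) * (p-1) * (1 - (1-1/p)^(2*n)) := by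
    have h2 : (0:ℝ) ≤ (2*n+1) * (p-1) := mul_nonneg (by positivity) (by linarith)
    have h3 := mul_le_mul_of_nonneg_left hb h2
    have h4 : 0 < (2*p-1) - (2*n+1) * (p-1) * (1 - (1 - 2*n*(1/p) + 2*n*(2*n-1)/2*(1/p)^2 - 2*n*(2*n-1)*(2*n-2)/6*(1/p)^3)) := by
      rw [hp]
      obtain ⟨t, ht⟩ : ∃ t : ℝ, (n:ℝ) = t + 2 := ⟨n - 2, by ring⟩
      have ht0 : 0 ≤ t := by linarith
      rw [ht]
      field_simp
      ring_nf
      positivity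
    linarith
  have h5 : 0 < p * p^(2*n) * ((2*p-1) - (2*n+1) * (p-1) * (1 - (1-1/p)^(2*n))) := by positivity
  rw [← h] at h5
  exact pos_of_mul_pos_right h5 (by linarith)

lemma sign_lo (n : ℕ) (hn : 2 ≤ n) :
    nodeRelR (SimpleGraph.cycleGraph (2*n+1)) (2*(n:ℝ)^2-1) < 0 := by
  have hn' : (2:ℝ) ≤ n := by exact_mod_cast hn
  set p : ℝ := 2*(n:ℝ)^2-1 with hp
  have hp1 : 1 < p := by nlinarith
  have h := nodeRel_odd n hn p hp1
  have hx1 : 1/p ≤ 1 := by rw [div_le_one (by linarith)]; linarith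
  have hb := pow_le2 (1/p) (by positivity) hx1 (2*n)
  push_cast at hb
  have : 0 < -((2*p-1) - (2*n+1) * (p-1) * (1 - (1-1/p)^(2*n))) := by
    have h2 : (0:ℝ) ≤ (2*n+1) * (p-1) := mul_nonneg (by positivity) (by linarith)
    have h3 := mul_le_mul_of_nonneg_left hb h2
    have h4 : 0 < -((2*p-1) - (2*n+1) * (p-1) * (1 - (1 - 2*n*(1/p) + 2*n*(2*n-1)/2*(1/p)^2))) := by
      have hpp : 0 < p := by linarith
      have e : -((2*p-1) - (2*n+1) * (p-1) * (1 - (1 - 2*n*(1/p) + 2*n*(2*n-1)/2*(1/p)^2)))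
        = (-(2*p-1)*p^2 + (2*n+1)*(p-1)*(2*n*p - n*(2*n-1)))/p^2 := by
        field_simp
        ring
      rw [e]
      apply div_pos _ (by positivity)
      rw [hp]
      obtain ⟨t, ht⟩ : ∃ t : ℝ, (n:ℝ) = t + 2 := ⟨n - 2, by ring⟩
      have ht0 : 0 ≤ t := by linarith
      rw [ht]
      ring_nf
      positivity
    linarith
  have h5 : 0 < p * p^(2*n) * -((2*p-1) - (2*n+1) * (p-1) * (1 - (1-1/p)^(2*n))) := by positivity
  rw [mul_neg, ← h, ← mul_neg] at h5
  have := pos_of_mul_pos_right h5 (by linarith)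
  linarith

lemma root_exists (n : ℕ) (hn : 2 ≤ n) : ∃ p : ℝ,
      2 * (n : ℝ) ^ 2 - 1 < p ∧ p < 2 * (n : ℝ) ^ 2 ∧
      nodeRelR (SimpleGraph.cycleGraph (2 * n + 1)) p = 0 := by
  have hc : Continuous (nodeRelR (SimpleGraph.cycleGraph (2 * n + 1))) := by
    unfold nodeRelR
    fun_prop
  have := intermediate_value_Ioo (a := 2 * (n : ℝ) ^ 2 - 1) (b := 2 * (n : ℝ) ^ 2)
    (by linarith) hc.continuousOn
  obtain ⟨p, ⟨h1, h2⟩, h3⟩ := this ⟨sign_lo n hn, sign_hi n hn⟩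
  exact ⟨p, h1, h2, h3⟩

/-- For every n ≥ 2, the node reliability polynomial of the odd cycle C_{2n+1} has a real
root in the open interval (2n²-1, 2n²); in particular, the collection of real roots of
node reliability polynomials over all graphs is unbounded. -/
theorem cycle_nodeRel_root_in_interval_and_real_roots_unbounded :
    (∀ n : ℕ, 2 ≤ n → ∃ p : ℝ,
      2 * (n : ℝ) ^ 2 - 1 < p ∧ p < 2 * (n : ℝ) ^ 2 ∧
      nodeRelR (SimpleGraph.cycleGraph (2 * n + 1)) p = 0) ∧
    (∀ M : ℝ, ∃ (N : ℕ) (G : SimpleGraph (Fin N)) (p : ℝ),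
      nodeRelR G p = 0 ∧ M < |p|) := by
  refine ⟨root_exists, fun M => ?_⟩
  obtain ⟨n, hn⟩ := exists_nat_gt M
  obtain ⟨p, h1, h2, h3⟩ := root_exists (n+2) (by omega)
  refine ⟨_, _, p, h3, lt_of_lt_of_le ?_ (le_abs_self p)⟩
  push_cast at h1
  have : (0:ℝ) ≤ n := by positivity
  nlinarith
end

section
/- The collection of all roots of node reliability polynomials is dense in the complex plane: for every z ∈ ℂ and every ε > 0 there exist a finite simple graph G (which may be taken connected) and a complex number w with |w − z| < ε and NRel(G; w) = 0. -/
open scoped Classical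

/-- The node reliability polynomial `NRel(G;p) = ∑_{k=1}^n c_k p^k (1-p)^(n-k)`,
at a complex argument. -/
noncomputable def nodeRel {V : Type*} [Fintype V] (G : SimpleGraph V) (p : ℂ) : ℂ :=
  ∑ k ∈ Finset.Icc 1 (Fintype.card V),
    (connCount G k : ℂ) * p ^ k * (1 - p) ^ (Fintype.card V - k)


/-- Connectedness of the up-set of `s`, phrased through closed predicates. -/
def Cn {V : Type*} (G : SimpleGraph V) (s : V → Bool) : Prop :=
  (∃ v, s v = true) ∧ ∀ f : V → Prop,
    (∀ a b, s a = true → s b = true → G.Adj a b → f a → f b) →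
      ∀ a b, s a = true → s b = true → f a → f b

lemma connected_iff_pred {V : Type*} (G : SimpleGraph V) :
    G.Connected ↔ Nonempty V ∧ ∀ f : V → Prop,
      (∀ a b, G.Adj a b → f a → f b) → ∀ a b, f a → f b := by
  constructor
  · intro h
    refine ⟨h.nonempty, fun f hf a b ha => ?_⟩
    obtain ⟨w⟩ := h.preconnected a b
    induction w with
    | nil => exact ha
    | cons hadj w ih => exact ih (hf _ _ hadj ha)
  · rintro ⟨hne, h⟩
    have := hne
    refine ⟨fun a b => ?_⟩
    exact h (fun x => G.Reachable a x) (fun x y hxy hx => hx.trans hxy.reachable) a b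
      (SimpleGraph.Reachable.refl a)

lemma Cn_iff {V : Type*} (G : SimpleGraph V) (s : V → Bool) (S : Set V)
    (hS : ∀ v, v ∈ S ↔ s v = true) : (G.induce S).Connected ↔ Cn G s := by
  rw [connected_iff_pred, Cn]
  constructor
  · rintro ⟨⟨v, hv⟩, h⟩
    refine ⟨⟨v, (hS v).1 hv⟩, fun f hf a b ha hb hfa => ?_⟩
    exact h (fun x => f x.1) (fun x y hxy hx => hf _ _ ((hS _).1 x.2) ((hS _).1 y.2) hxy hx)
      ⟨a, (hS a).2 ha⟩ ⟨b, (hS b).2 hb⟩ hfa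
  · rintro ⟨⟨v, hv⟩, h⟩
    refine ⟨⟨v, (hS v).2 hv⟩, fun f hf a b hfa => ?_⟩
    obtain ⟨hb, hfb⟩ := h (fun x => ∃ hx : x ∈ S, f ⟨x, hx⟩)
      (fun x y hx hy hxy ⟨hx', hfx⟩ => ⟨(hS y).2 hy, hf ⟨x, hx'⟩ ⟨y, (hS y).2 hy⟩ hxy hfx⟩)
      a.1 b.1 ((hS _).1 a.2) ((hS _).1 b.2) ⟨a.2, hfa⟩
    exact hfb

lemma nodeRel_eq {V : Type*} [Fintype V] [DecidableEq V] (G : SimpleGraph V) (p : ℂ) :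
    nodeRel G p = ∑ s : V → Bool,
      if Cn G s then ∏ v, (if s v = true then p else 1 - p) else 0 := by
  have h1 : nodeRel G p = ∑ S ∈ Finset.univ.filter
      (fun S : Finset V => (G.induce (S : Set V)).Connected),
      p ^ S.card * (1 - p) ^ (Fintype.card V - S.card) := by
    rw [nodeRel, ← Finset.sum_fiberwise_of_maps_to (g := fun S : Finset V => S.card)
      (t := Finset.Icc 1 (Fintype.card V))]
    · refine Finset.sum_congr rfl fun k _ => ?_
      rw [Finset.sum_congr rfl (g := fun _ => p ^ k * (1 - p) ^ (Fintype.card V - k))]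
      · rw [Finset.sum_const, connCount, Finset.filter_filter, nsmul_eq_mul, mul_assoc]
        congr 4
        ext S
        simp [and_comm]
      · intro S hS
        rw [(Finset.mem_filter.1 hS).2]
    · intro S hS
      have hc := (Finset.mem_filter.1 hS).2
      obtain ⟨v, hv⟩ := hc.nonempty
      rw [Finset.mem_Icc]
      exact ⟨Finset.card_pos.2 ⟨v, hv⟩, Finset.card_le_univ S⟩
  rw [h1, Finset.sum_filter]
  refine Finset.sum_bij' (fun S _ => fun v => decide (v ∈ S))
    (fun s _ => Finset.univ.filter fun v => s v = true) ?_ ?_ ?_ ?_ ?_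
  · simp
  · simp
  · intro S _; ext v; simp
  · intro s _; ext v; simp
  · intro S _
    have := Cn_iff G (fun v => decide (v ∈ S)) (S : Set V) (by simp)
    rw [if_congr this rfl rfl]
    congr 1
    simp only [decide_eq_true_eq]
    rw [Finset.prod_ite, Finset.prod_const, Finset.prod_const]
    congr 2
    · simp
    · rw [← Finset.card_compl]; congr 1; ext; simp

lemma Cn_iso {V W : Type*} (G : SimpleGraph V)
    (H : SimpleGraph W) (e : V ≃ W) (he : ∀ a b, H.Adj (e a) (e b) ↔ G.Adj a b) (s : V → Bool) :
    Cn G s ↔ Cn H (fun w => s (e.symm w)) := by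
  constructor
  · rintro ⟨⟨v, hv⟩, h⟩
    refine ⟨⟨e v, by simpa using hv⟩, fun f hf a b ha hb hfa => ?_⟩
    have := h (fun x => f (e x)) (fun x y hx hy hxy => hf _ _ (by simpa using hx)
      (by simpa using hy) ((he _ _).2 hxy)) (e.symm a) (e.symm b) ha hb
    simp only [Equiv.apply_symm_apply] at this
    exact this hfa
  · rintro ⟨⟨w, hw⟩, h⟩
    refine ⟨⟨e.symm w, hw⟩, fun f hf a b ha hb hfa => ?_⟩
    have := h (fun x => f (e.symm x)) (fun x y hx hy hxy => hf _ _ hx hy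
      (by rw [← he]; simpa using hxy)) (e a) (e b)
      (by simpa using ha) (by simpa using hb)
    simp only [Equiv.symm_apply_apply] at this
    exact this hfa

lemma nodeRel_iso {V W : Type*} [Fintype V] [Fintype W] (G : SimpleGraph V)
    (H : SimpleGraph W) (e : V ≃ W) (he : ∀ a b, H.Adj (e a) (e b) ↔ G.Adj a b) (p : ℂ) :
    nodeRel G p = nodeRel H p := by
  rw [nodeRel_eq, nodeRel_eq]
  refine Finset.sum_bij' (fun s _ => fun w => s (e.symm w)) (fun s _ => fun v => s (e v))
    (by simp) (by simp) (by intro s _; ext; simp) (by intro s _; ext; simp) fun s _ => ?_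
  have hp : ∏ v, (if s v = true then p else 1 - p) = ∏ w,
      (if s (e.symm w) = true then p else 1 - p) := by
    refine Fintype.prod_equiv e _ _ fun v => ?_
    simp
  rw [if_congr (Cn_iso G H e he s) rfl rfl, hp]

/-- Replace every vertex by a clique of size `m`. -/
def blow {V : Type*} (G : SimpleGraph V) (m : ℕ) : SimpleGraph (V × Fin m) where
  Adj x y := x ≠ y ∧ (x.1 = y.1 ∨ G.Adj x.1 y.1)
  symm := ⟨by
    rintro x y ⟨h, h'⟩
    exact ⟨h.symm, h'.imp Eq.symm (fun h => h.symm)⟩⟩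
  loopless := ⟨fun x h => h.1 rfl⟩

lemma Cn_blow {V : Type*} (G : SimpleGraph V) (m : ℕ) (s : V × Fin m → Bool) :
    Cn (blow G m) s ↔ Cn G (fun v => decide (∃ j, s (v, j) = true)) := by
  constructor
  · rintro ⟨⟨⟨v, i⟩, hv⟩, h⟩
    refine ⟨⟨v, by simpa using ⟨i, hv⟩⟩, fun f hf a b ha hb hfa => ?_⟩
    simp only [decide_eq_true_eq] at ha hb hf
    obtain ⟨i, hi⟩ := ha
    obtain ⟨j, hj⟩ := hb
    refine h (fun x => f x.1) ?_ (a, i) (b, j) hi hj hfa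
    rintro ⟨x, k⟩ ⟨y, l⟩ hx hy ⟨_, hxy⟩ hfx
    rcases hxy with hxy | hxy
    · simp only at hxy hfx ⊢
      rwa [← hxy]
    · exact hf x y ⟨k, hx⟩ ⟨l, hy⟩ hxy hfx
  · rintro ⟨⟨v, hv⟩, h⟩
    simp only [decide_eq_true_eq] at hv h
    obtain ⟨i, hi⟩ := hv
    refine ⟨⟨(v, i), hi⟩, ?_⟩
    rintro f hf ⟨a, k⟩ ⟨b, l⟩ ha hb hfa
    have same : ∀ v i j, s (v, i) = true → s (v, j) = true → f (v, i) → f (v, j) := by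
      intro v i j hi hj hfi
      by_cases hij : i = j
      · rwa [← hij]
      · exact hf _ _ hi hj ⟨by simpa using hij, Or.inl rfl⟩ hfi
    obtain ⟨j, hj, hfj⟩ := h (fun v => ∃ i, s (v, i) = true ∧ f (v, i)) (by
      rintro x y ⟨i, hi⟩ ⟨j, hj⟩ hxy ⟨i', hi', hfi'⟩
      refine ⟨j, hj, hf _ _ hi' hj ⟨?_, Or.inr hxy⟩ hfi'⟩
      intro he
      exact hxy.ne (congrArg Prod.fst he)) a b ⟨k, ha⟩ ⟨l, hb⟩ ⟨k, ha, hfa⟩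
    exact same b j l hj hb hfj

lemma sum_weight {ι : Type*} [Fintype ι] (p : ℂ) :
    ∑ s : ι → Bool, ∏ v, (if s v = true then p else 1 - p) = 1 := by
  have := (Finset.prod_univ_sum (fun _ : ι => (Finset.univ : Finset Bool))
    (fun _ b => if b = true then p else 1 - p)).symm
  rw [Fintype.piFinset_univ] at this
  rw [this]
  simp

lemma sum_weight_none {ι : Type*} [Fintype ι] (p : ℂ) (b : Bool) :
    ∑ s ∈ Finset.univ.filter (fun s : ι → Bool => decide (∃ j, s j = true) = b),
      ∏ v, (if s v = true then p else 1 - p) =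
    if b = true then 1 - (1 - p) ^ Fintype.card ι else 1 - (1 - (1 - p) ^ Fintype.card ι) := by
  have hF : ∑ s ∈ Finset.univ.filter (fun s : ι → Bool => decide (∃ j, s j = true) = false),
      ∏ v, (if s v = true then p else 1 - p) = (1 - p) ^ Fintype.card ι := by
    rw [show Finset.univ.filter (fun s : ι → Bool => decide (∃ j, s j = true) = false)
      = {fun _ => false} by ext s; simp [funext_iff]]
    simp
  have hT := Finset.sum_filter_add_sum_filter_not (Finset.univ : Finset (ι → Bool))
    (fun s => decide (∃ j, s j = true) = true) (fun s => ∏ v, (if s v = true then p else 1 - p))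
  rw [sum_weight] at hT
  simp only [Bool.not_eq_true] at hT
  rw [hF] at hT
  cases b
  · rw [hF]; simp
  · rw [if_pos rfl]; exact eq_sub_of_add_eq hT

lemma nodeRel_blow {V : Type*} [Fintype V] (G : SimpleGraph V) (m : ℕ) (p : ℂ) :
    nodeRel (blow G m) p = nodeRel G (1 - (1 - p) ^ m) := by
  rw [nodeRel_eq, nodeRel_eq]
  simp only [Cn_blow]
  rw [Fintype.sum_equiv (Equiv.curry V (Fin m) Bool) _ (fun s : V → Fin m → Bool =>
    if Cn G (fun v => decide (∃ j, s v j = true)) then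
      ∏ v, ∏ j, (if s v j = true then p else 1 - p) else 0)
    (fun s => by simp [Fintype.prod_prod_type, Function.curry])]
  rw [← Finset.sum_fiberwise_of_maps_to (g := fun (s : V → Fin m → Bool) (v : V) =>
      decide (∃ j, s v j = true)) (t := Finset.univ) (by simp)]
  refine Finset.sum_congr rfl fun T _ => ?_
  have hw : ∏ v, (if T v = true then (1 - (1 - p) ^ m) else 1 - (1 - (1 - p) ^ m)) =
      ∑ s ∈ Finset.univ.filter (fun s : V → Fin m → Bool =>
        (fun v => decide (∃ j, s v j = true)) = T),
        ∏ v, ∏ j, (if s v j = true then p else 1 - p) := by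
    have := fun v : V => sum_weight_none (ι := Fin m) p (T v)
    simp only [Fintype.card_fin] at this
    rw [← Finset.prod_congr rfl (fun v _ => this v), Finset.prod_univ_sum]
    refine Finset.sum_congr ?_ fun _ _ => rfl
    ext s
    simp only [Fintype.mem_piFinset, Finset.mem_filter, Finset.mem_univ, true_and, funext_iff]
    refine forall_congr' fun a => ?_
    apply Iff.of_eq
    congr
  rw [hw]
  split_ifs with hT
  · refine Finset.sum_congr rfl fun s hs => ?_
    rw [(Finset.mem_filter.1 hs).2, if_pos hT]
  · refine Finset.sum_eq_zero fun s hs => ?_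
    rw [(Finset.mem_filter.1 hs).2, if_neg hT]


/-- A universal vertex `none` joined to the corona of a clique; `(i, true)` are the core
vertices, `(i, false)` the pendant vertices. -/
def gam (n : ℕ) : SimpleGraph (Option (Fin n × Bool)) where
  Adj x y := x ≠ y ∧ (x = none ∨ y = none ∨
    ∃ i j a b, x = some (i, a) ∧ y = some (j, b) ∧ (i = j ∨ (a = true ∧ b = true)))
  symm := ⟨by
    rintro x y ⟨h, h' | h' | ⟨i, j, a, b, hx, hy, h'⟩⟩
    · exact ⟨h.symm, Or.inr (Or.inl h')⟩
    · exact ⟨h.symm, Or.inl h'⟩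
    · exact ⟨h.symm, Or.inr (Or.inr ⟨j, i, b, a, hy, hx, h'.imp Eq.symm And.symm⟩)⟩⟩
  loopless := ⟨fun x h => h.1 rfl⟩

lemma Cn_gam_true (n : ℕ) (s : Option (Fin n × Bool) → Bool) (hs : s none = true) :
    Cn (gam n) s := by
  refine ⟨⟨none, hs⟩, fun f hf a b ha hb hfa => ?_⟩
  have h1 : f none := by
    by_cases h : a = none
    · rwa [← h]
    · exact hf a none ha hs ⟨h, Or.inr (Or.inl rfl)⟩ hfa
  by_cases h : b = none
  · rwa [h]
  · exact hf none b hs hb ⟨Ne.symm h, Or.inl rfl⟩ h1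

/-- The configuration with only the pendant vertex `i` up. -/
def single (n : ℕ) (i : Fin n) : Fin n → Bool → Bool :=
  fun j b => decide (j = i ∧ b = false)

lemma single_inj (n : ℕ) (i j : Fin n) (h : single n i = single n j) : i = j := by
  have := congrFun (congrFun h i) false
  simpa [single] using this

lemma Cn_gam_good (n : ℕ) (s : Option (Fin n × Bool) → Bool) (hs : s none = false)
    (hg : ∀ i, s (some (i, false)) = true → s (some (i, true)) = true)
    (hne : ∃ i b, s (some (i, b)) = true) : Cn (gam n) s := by
  have hg' : ∀ i b, s (some (i, b)) = true → s (some (i, true)) = true := by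
    intro i b h
    cases b
    · exact hg i h
    · exact h
  obtain ⟨i, b, hi⟩ := hne
  refine ⟨⟨_, hi⟩, ?_⟩
  intro f hf a b ha hb hfa
  rcases a with _ | ⟨i, a⟩
  · simp [hs] at ha
  rcases b with _ | ⟨j, b⟩
  · simp [hs] at hb
  have step : ∀ i j a b, s (some (i, a)) = true → s (some (j, b)) = true →
      (i = j ∨ (a = true ∧ b = true)) → f (some (i, a)) → f (some (j, b)) := by
    intro i j a b h1 h2 h3 h4
    by_cases he : (some (i, a) : Option (Fin n × Bool)) = some (j, b)
    · rwa [← he]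
    · exact hf _ _ h1 h2 ⟨he, Or.inr (Or.inr ⟨i, j, a, b, rfl, rfl, h3⟩)⟩ h4
  have f1 := step i i a true ha (hg' _ _ ha) (Or.inl rfl) hfa
  have f2 := step i j true true (hg' _ _ ha) (hg' _ _ hb) (Or.inr ⟨rfl, rfl⟩) f1
  exact step j j true b (hg' _ _ hb) hb (Or.inl rfl) f2

lemma Cn_gam_bad (n : ℕ) (s : Option (Fin n × Bool) → Bool) (hs : s none = false)
    (i : Fin n) (hi : s (some (i, false)) = true) (hi' : s (some (i, true)) = false) :
    Cn (gam n) s ↔ ∀ j b, s (some (j, b)) = single n i j b := by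
  constructor
  · rintro ⟨_, h⟩
    have key := h (fun x => x = some (i, false)) (by
      rintro x y hx hy ⟨hxy, h'⟩ rfl
      exfalso
      rcases h' with h' | h' | ⟨k, l, a, b, h1, h2, h3⟩
      · cases h'
      · subst h'; simp [hs] at hy
      · simp only [Option.some.injEq, Prod.mk.injEq] at h1
        obtain ⟨rfl, rfl⟩ := h1
        subst h2
        rcases h3 with rfl | h3
        · cases b
          · exact hxy rfl
          · simp [hi'] at hy
        · simp at h3)
    intro j b
    by_cases hj : s (some (j, b)) = true
    · have := key _ _ hi hj rfl
      simp only [Option.some.injEq, Prod.mk.injEq] at this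
      rw [hj]; simp [single, this]
    · have : ¬ (j = i ∧ b = false) := by
        rintro ⟨rfl, rfl⟩; exact hj hi
      simp only [Bool.not_eq_true] at hj
      rw [hj]; simp only [single, this, decide_false]
  · intro h
    refine ⟨⟨_, hi⟩, ?_⟩
    have key : ∀ x, s x = true → x = some (i, false) := by
      rintro (_ | ⟨j, b⟩) hx
      · simp [hs] at hx
      · rw [h] at hx
        simp only [single, decide_eq_true_eq] at hx
        rw [hx.1, hx.2]
    intro f _ a b ha hb hfa
    rw [key b hb, ← key a ha]; exact hfa

/-- The vertex configuration from `s none` and the rest. -/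
def mk (n : ℕ) (a : Bool) (t : Fin n → Bool → Bool) : Option (Fin n × Bool) → Bool
  | none => a
  | some (i, b) => t i b

lemma indicator_eq (n : ℕ) (t : Fin n → Bool → Bool) :
    (if Cn (gam n) (mk n false t) then (1 : ℂ) else 0) =
      (if ∀ i, t i false = true → t i true = true then 1 else 0)
      - (if t = (fun _ _ => false) then 1 else 0)
      + ∑ i, if t = single n i then 1 else 0 := by
  by_cases hg : ∀ i, t i false = true → t i true = true
  · have hz : ∀ i, t ≠ single n i := by
      rintro i rfl
      have := hg i
      simp [single] at this
    simp only [hz, if_false, Finset.sum_const_zero, add_zero]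
    rw [if_pos hg]
    by_cases h0 : t = fun _ _ => false
    · have : ¬ Cn (gam n) (mk n false t) := by
        rintro ⟨⟨v, hv⟩, _⟩
        rcases v with _ | ⟨i, b⟩
        · simp [mk] at hv
        · simp [mk, h0] at hv
      rw [if_neg this]; simp [h0]
    · have : Cn (gam n) (mk n false t) := by
        refine Cn_gam_good n _ rfl hg ?_
        by_contra hcon
        apply h0
        funext i b
        simp only [not_exists, Bool.not_eq_true] at hcon
        exact hcon i b
      rw [if_pos this, if_neg h0]; simp
  · have h0 : t ≠ fun _ _ => false := by
      rintro rfl; simp at hg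
    rw [if_neg hg, if_neg h0]
    push Not at hg
    obtain ⟨i, hi, hi'⟩ := hg
    simp only [ne_eq, Bool.not_eq_true] at hi'
    have h1 : Cn (gam n) (mk n false t) ↔ t = single n i := by
      rw [Cn_gam_bad n _ rfl i hi hi']
      simp [mk, funext_iff]
    rw [Finset.sum_eq_single i]
    · rw [if_congr h1 rfl rfl]; simp
    · intro j _ hj
      rw [if_neg]
      rintro rfl
      simp only [single, decide_eq_true_eq, and_true] at hi
      exact hj hi.symm
    · simp

lemma sum_bb (F : (Bool → Bool) → ℂ) : ∑ x, F x =
    F (fun b => cond b true true) + F (fun b => cond b true false)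
    + F (fun b => cond b false true) + F (fun b => cond b false false) := by
  rw [Fintype.sum_equiv (Equiv.boolArrowEquivProd Bool) F
    (fun y => F ((Equiv.boolArrowEquivProd Bool).symm y)) (fun x => by rw [Equiv.symm_apply_apply])]
  rw [Fintype.sum_prod_type]
  simp only [Fintype.sum_bool]
  have : ∀ a c : Bool, (Equiv.boolArrowEquivProd Bool).symm (a, c) = fun b => cond b c a := by
    intro a c; funext b; cases b <;> rfl
  simp only [this]
  ring

lemma nodeRel_gam (n : ℕ) (hn : 1 ≤ n) (p : ℂ) :
    nodeRel (gam n) p = p + (1 - p) * ((p + (1 - p) ^ 2) ^ n - (1 - p) ^ (2 * n)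
      + n * (p * (1 - p) ^ (2 * n - 1))) := by
  set w : Bool → ℂ := fun b => if b = true then p else 1 - p with hw
  have h1 : nodeRel (gam n) p = ∑ x : Bool × (Fin n → Bool → Bool),
      if Cn (gam n) (mk n x.1 x.2) then w x.1 * ∏ i, (w (x.2 i true) * w (x.2 i false)) else 0 := by
    rw [nodeRel_eq]
    refine Finset.sum_bij' (fun s _ => (s none, fun i b => s (some (i, b))))
      (fun x _ => mk n x.1 x.2) (by simp) (by simp) ?_ ?_ ?_
    · intro s _; funext v; rcases v with _ | ⟨i, b⟩ <;> rfl
    · intro x _; rfl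
    · intro s _
      have e : mk n (s none) (fun i b => s (some (i, b))) = s := by
        funext v; rcases v with _ | ⟨i, b⟩ <;> rfl
      simp only [e]
      rw [Fintype.prod_option, Fintype.prod_prod_type]
      simp only [Fintype.prod_bool, hw]
  have hprod : ∀ P : (Bool → Bool) → Prop,
      ∑ t : Fin n → Bool → Bool, (if ∀ i, P (t i) then ∏ i, (w (t i true) * w (t i false)) else 0)
      = (∑ x : Bool → Bool, if P x then w (x true) * w (x false) else 0) ^ n := by
    intro P
    have := Finset.prod_univ_sum (fun _ : Fin n => (Finset.univ : Finset (Bool → Bool)))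
      (fun _ x => if P x then w (x true) * w (x false) else 0)
    rw [Fintype.piFinset_univ, Finset.prod_const, Finset.card_univ, Fintype.card_fin] at this
    rw [this]
    refine Finset.sum_congr rfl fun t _ => ?_
    split_ifs with h
    · exact Finset.prod_congr rfl fun i _ => by rw [if_pos (h i)]
    · push Not at h
      obtain ⟨i, hi⟩ := h
      exact (Finset.prod_eq_zero (Finset.mem_univ i) (by rw [if_neg hi])).symm
  have hT : ∑ t : Fin n → Bool → Bool, ∏ i, (w (t i true) * w (t i false)) = 1 := by
    have := hprod (fun _ => True)
    simp only [implies_true, if_true] at this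
    rw [this, sum_bb]
    simp only [hw, cond_true, cond_false, if_true, Bool.false_eq_true, if_false]
    rw [show p * p + p * (1 - p) + (1 - p) * p + (1 - p) * (1 - p) = 1 by ring, one_pow]
  have hG := hprod (fun x => x false = true → x true = true)
  rw [sum_bb] at hG
  simp only [hw, cond_true, cond_false, if_true, Bool.false_eq_true, if_false, implies_true,
    imp_self, imp_false, not_true] at hG
  rw [show p * p + p * (1 - p) + 0 + (1 - p) * (1 - p) = p + (1 - p) ^ 2 by ring] at hG
  have hS : ∀ i : Fin n, ∏ j, (w (single n i j true) * w (single n i j false))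
      = p * (1 - p) ^ (2 * n - 1) := by
    intro i
    rw [← Finset.mul_prod_erase _ _ (Finset.mem_univ i),
      Finset.prod_congr rfl (g := fun _ => (1 - p) ^ 2)]
    · rw [Finset.prod_const, Finset.card_erase_of_mem (Finset.mem_univ i), Finset.card_univ,
        Fintype.card_fin, ← pow_mul]
      simp only [single, hw]
      obtain ⟨k, rfl⟩ : ∃ k, n = k + 1 := ⟨n - 1, by omega⟩
      rw [show 2 * (k + 1) - 1 = 2 * k + 1 by omega, show k + 1 - 1 = k by omega]
      simp
      ring
    · intro j hj
      simp only [single, hw, Finset.ne_of_mem_erase hj]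
      simp
      ring
  rw [h1, Fintype.sum_prod_type, Fintype.sum_bool]
  congr 1
  · simp only [Cn_gam_true n (mk n true _) rfl, if_true]
    rw [← Finset.mul_sum, hT]; simp [hw]
  · have : ∀ t : Fin n → Bool → Bool,
      (if Cn (gam n) (mk n false t) then w false * ∏ i, (w (t i true) * w (t i false)) else 0) =
      (1 - p) * ((if ∀ i, t i false = true → t i true = true then
          ∏ i, (w (t i true) * w (t i false)) else 0)
        - (if t = (fun _ _ => false) then ∏ i, (w (t i true) * w (t i false)) else 0)
        + ∑ i, if t = single n i then ∏ i, (w (t i true) * w (t i false)) else 0) := by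
      intro t
      have hi := indicator_eq n t
      have hw0 : w false = 1 - p := by simp [hw]
      rw [hw0]
      generalize ∏ i, (w (t i true) * w (t i false)) = W
      have hc : ∀ (P : Prop) [Decidable P] (x : ℂ),
        (if P then x else 0) = x * (if P then (1 : ℂ) else 0) := by
        intro P _ x; simp
      rw [hc, hi, hc _ W, hc (t = fun _ _ => false) W,
        Finset.sum_congr rfl (fun i _ => hc (t = single n i) W), ← Finset.mul_sum]
      ring
    simp only [this]
    rw [← Finset.mul_sum, Finset.sum_add_distrib, Finset.sum_sub_distrib, hG, Finset.sum_comm]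
    simp only [Finset.sum_ite_eq', Finset.mem_univ, if_true, hS]
    simp [hw]
    left
    rw [pow_mul, sq]


lemma exists_big (t : ℝ) (ht : 0 < t) :
    ∃ n : ℕ, 1 ≤ n ∧ 2 * (n : ℝ) + 3 < t * (1 + t) ^ n := by
  have h := tendsto_pow_const_mul_const_pow_of_abs_lt_one 1 (r := (1 + t)⁻¹) (by
    rw [abs_of_pos (by positivity)]
    exact inv_lt_one_of_one_lt₀ (by linarith))
  have h2 := (h.eventually (gt_mem_nhds (show (0 : ℝ) < t / 5 by positivity))).and
    (Filter.eventually_ge_atTop 1)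
  obtain ⟨n, hn, hn1⟩ := h2.exists
  refine ⟨n, hn1, ?_⟩
  have hn' : (1 : ℝ) ≤ n := by exact_mod_cast hn1
  have hpos : (0 : ℝ) < (1 + t) ^ n := by positivity
  rw [pow_one, inv_pow, ← div_eq_mul_inv, div_lt_iff₀ hpos] at hn
  linarith

/-- The polynomial at `q = -t`. -/
lemma root_small (t₀ : ℝ) (h0 : 0 < t₀) (h1 : t₀ < 1) :
    ∃ n : ℕ, 1 ≤ n ∧ ∃ t : ℝ, 0 < t ∧ t < t₀ ∧
      1 + t - t * (1 + t + t ^ 2) ^ n + t ^ (2 * n + 1) + n * (1 + t) * t ^ (2 * n) = 0 := by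
  obtain ⟨n, hn, hb⟩ := exists_big t₀ h0
  refine ⟨n, hn, ?_⟩
  let f : ℝ → ℝ := fun t =>
    1 + t - t * (1 + t + t ^ 2) ^ n + t ^ (2 * n + 1) + n * (1 + t) * t ^ (2 * n)
  have hf : ContinuousOn f (Set.Icc 0 t₀) := by
    apply Continuous.continuousOn; fun_prop
  have hf0 : f 0 = 1 := by
    have : 2 * n ≠ 0 := by omega
    simp [f, this]
  have hf1 : f t₀ < 0 := by
    have a1 : t₀ ^ (2 * n + 1) ≤ 1 := pow_le_one₀ h0.le h1.le
    have a2 : t₀ ^ (2 * n) ≤ 1 := pow_le_one₀ h0.le h1.le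
    have a3 : (1 + t₀) ^ n ≤ (1 + t₀ + t₀ ^ 2) ^ n := by exact pow_le_pow_left₀ (by linarith) (by nlinarith) n
    have a4 : n * (1 + t₀) * t₀ ^ (2 * n) ≤ n * 2 * 1 := by gcongr; linarith
    have a5 := mul_le_mul_of_nonneg_left a3 h0.le
    simp only [f]
    linarith
  obtain ⟨t, ht, hft⟩ := intermediate_value_Ioo' h0.le hf (show (0 : ℝ) ∈ Set.Ioo (f t₀) (f 0) by
    rw [hf0]; exact ⟨hf1, one_pos⟩)
  exact ⟨t, ht.1, ht.2, hft⟩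

lemma root_large (s₀ : ℝ) (h0 : 0 < s₀) (h1 : s₀ < 1) :
    ∃ n : ℕ, 1 ≤ n ∧ ∃ t : ℝ, s₀⁻¹ < t ∧
      1 + t - t * (1 + t + t ^ 2) ^ n + t ^ (2 * n + 1) + n * (1 + t) * t ^ (2 * n) = 0 := by
  obtain ⟨n, hn, hb⟩ := exists_big s₀ h0
  refine ⟨n, hn, ?_⟩
  have hn' : (1 : ℝ) ≤ n := by exact_mod_cast hn
  let f : ℝ → ℝ := fun s => s ^ (2 * n) * (1 + s) + 1 + n * (1 + s) - (1 + s + s ^ 2) ^ n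
  have hf : ContinuousOn f (Set.Icc 0 s₀) := by
    apply Continuous.continuousOn; fun_prop
  have hf0 : f 0 = n := by
    have : 2 * n ≠ 0 := by omega
    simp [f, this]
  have hf1 : f s₀ < 0 := by
    have a2 : s₀ ^ (2 * n) * (1 + s₀) ≤ 1 * 2 := by
      gcongr
      · exact pow_le_one₀ h0.le h1.le
      · linarith
    have a3 : (1 + s₀) ^ n ≤ (1 + s₀ + s₀ ^ 2) ^ n := by exact pow_le_pow_left₀ (by linarith) (by nlinarith) n
    have a4 : n * (1 + s₀) ≤ n * 2 := by gcongr; linarith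
    have a5 : s₀ * (1 + s₀) ^ n ≤ 1 * (1 + s₀) ^ n := by gcongr
    simp only [f]
    linarith
  obtain ⟨s, hs, hfs⟩ := intermediate_value_Ioo' h0.le hf (show (0 : ℝ) ∈ Set.Ioo (f s₀) (f 0) by
    rw [hf0]; exact ⟨hf1, by linarith⟩)
  have hs0 : 0 < s := hs.1
  refine ⟨s⁻¹, (inv_lt_inv₀ h0 hs0).2 hs.2, ?_⟩
  have e1 : 1 + s⁻¹ + s⁻¹ ^ 2 = (1 + s + s ^ 2) * (s⁻¹) ^ 2 := by field_simp; ring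
  have e2 : (1 + s + s ^ 2) ^ n = s ^ (2 * n) * (1 + s) + 1 + n * (1 + s) := by
    simp only [f] at hfs; linarith
  have e3 : s⁻¹ ^ (2 * n) * s ^ (2 * n) = 1 := by rw [← mul_pow]; simp [hs0.ne']
  rw [e1, mul_pow, ← pow_mul, e2, pow_succ]
  have e4 : s⁻¹ * s = 1 := inv_mul_cancel₀ hs0.ne'
  generalize s⁻¹ ^ (2 * n) = X at *
  generalize s ^ (2 * n) = Y at *
  generalize s⁻¹ = u at *
  linear_combination (-u - u * s) * e3 + (-1 - X * n) * e4

lemma exists_log (x : ℝ) (hx : x ≠ 0) (B : ℝ) :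
    ∃ n : ℕ, 1 ≤ n ∧ ∃ t : ℝ, 0 < t ∧ B < Real.log t / x ∧
      1 + t - t * (1 + t + t ^ 2) ^ n + t ^ (2 * n + 1) + n * (1 + t) * t ^ (2 * n) = 0 := by
  have key : ∃ s : ℝ, 0 < s ∧ s < 1 ∧ Real.log s ≤ -|B * x| := by
    refine ⟨Real.exp (-|B * x| - 1), Real.exp_pos _, ?_, ?_⟩
    · rw [Real.exp_lt_one_iff]; have := abs_nonneg (B * x); linarith
    · rw [Real.log_exp]; linarith
  obtain ⟨s, hs0, hs1, hsl⟩ := key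
  rcases lt_or_gt_of_ne hx with h | h
  · obtain ⟨n, hn, t, ht0, ht1, ht⟩ := root_small s hs0 hs1
    refine ⟨n, hn, t, ht0, ?_, ht⟩
    rw [lt_div_iff_of_neg h]
    have := Real.log_lt_log ht0 ht1
    have := neg_abs_le (B * x)
    linarith
  · obtain ⟨n, hn, t, ht1, ht⟩ := root_large s hs0 hs1
    have hi : 0 < s⁻¹ := inv_pos.2 hs0
    refine ⟨n, hn, t, hi.trans ht1, ?_, ht⟩
    rw [lt_div_iff₀ h]
    have := Real.log_lt_log hi ht1
    rw [Real.log_inv] at this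
    have := le_abs_self (B * x)
    linarith

lemma exists_zeta (q : ℂ) (ε : ℝ) (hε : 0 < ε) :
    ∃ ζ : ℂ, ζ.re ≠ 0 ∧ ‖Complex.exp ζ - q‖ < ε := by
  by_cases hq : q = 0
  · have hpos : 0 < min (ε / 2) (1 / 2) := by positivity
    refine ⟨(Real.log (min (ε / 2) (1 / 2)) : ℝ), ?_, ?_⟩
    · rw [Complex.ofReal_re]
      apply ne_of_lt
      apply Real.log_neg hpos
      exact lt_of_le_of_lt (min_le_right _ _) (by norm_num)
    · rw [← Complex.ofReal_exp, Real.exp_log hpos, hq, sub_zero, Complex.norm_real,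
        Real.norm_of_nonneg hpos.le]
      exact lt_of_le_of_lt (min_le_left _ _) (by linarith)
  · have hc := Metric.continuous_iff.1 Complex.continuous_exp (Complex.log q) ε hε
    obtain ⟨δ, hδ, h⟩ := hc
    rw [Complex.exp_log hq] at h
    by_cases hr : (Complex.log q).re = 0
    · refine ⟨Complex.log q + ((δ / 2 : ℝ) : ℂ), ?_, ?_⟩
      · rw [Complex.add_re, hr, Complex.ofReal_re]; positivity
      · rw [← dist_eq_norm]
        apply h
        rw [dist_eq_norm, add_sub_cancel_left, Complex.norm_real, Real.norm_of_nonneg (by positivity)]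
        linarith
    · refine ⟨Complex.log q, hr, ?_⟩
      rw [Complex.exp_log hq]; simpa using hε

lemma exists_root_near (q : ℂ) (ε : ℝ) (hε : 0 < ε) :
    ∃ n : ℕ, 1 ≤ n ∧ ∃ m : ℕ, 1 ≤ m ∧ ∃ t : ℝ, ∃ w : ℂ, ‖w - q‖ < ε ∧ w ^ m = -(t : ℂ) ∧
      1 + t - t * (1 + t + t ^ 2) ^ n + t ^ (2 * n + 1) + n * (1 + t) * t ^ (2 * n) = 0 := by
  obtain ⟨ζ, hζ, hζq⟩ := exists_zeta q (ε / 2) (by positivity)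
  obtain ⟨δ, hδ, hc⟩ := Metric.continuous_iff.1 Complex.continuous_exp ζ (ε / 2) (by positivity)
  obtain ⟨n, hn, t, ht, hB, hroot⟩ := exists_log ζ.re hζ ((|ζ.re| + 2 * Real.pi) / δ + 1)
  have hB0 : 0 ≤ (|ζ.re| + 2 * Real.pi) / δ := by positivity
  set y := Real.log t / ζ.re with hy
  set m := ⌈y⌉₊ with hm
  have hm1 : y ≤ m := Nat.le_ceil y
  have hm2 : (m : ℝ) < y + 1 := Nat.ceil_lt_add_one (by linarith)
  have hmpos : (0 : ℝ) < m := by linarith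
  have hlog : Real.log t = y * ζ.re := by rw [hy]; field_simp
  set k := ⌊(m * ζ.im / Real.pi - 1) / 2⌋ with hk
  have hk1 := Int.floor_le ((m * ζ.im / Real.pi - 1) / 2)
  have hk2 := Int.lt_floor_add_one ((m * ζ.im / Real.pi - 1) / 2)
  rw [← hk] at hk1 hk2
  have hpi := Real.pi_pos
  set ξ : ℂ := ((Real.log t : ℂ) + (Real.pi * (2 * k + 1) : ℝ) * Complex.I) / m with hξ
  have hmC : (m : ℂ) ≠ 0 := by exact_mod_cast hmpos.ne'
  refine ⟨n, hn, m, by exact_mod_cast hmpos, t, Complex.exp ξ, ?_, ?_, hroot⟩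
  · have hd : dist ξ ζ < δ := by
      have e : ξ - ζ = (((y - m) * ζ.re : ℝ) + (Real.pi * (2 * k + 1) - m * ζ.im : ℝ) * Complex.I) / m := by
        rw [hξ, eq_div_iff hmC, sub_mul, div_mul_cancel₀ _ hmC]
        conv_lhs => rw [← Complex.re_add_im ζ]
        rw [← Complex.ofReal_natCast, ]
        rw [hlog]
        push_cast
        ring
      rw [dist_eq_norm, e, norm_div, Complex.norm_natCast, div_lt_iff₀ hmpos]
      have b1 : ‖(((y - m) * ζ.re : ℝ) : ℂ)‖ ≤ |ζ.re| := by
        rw [Complex.norm_real, Real.norm_eq_abs, abs_mul]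
        have : |y - m| ≤ 1 := by rw [abs_le]; constructor <;> linarith
        nlinarith [abs_nonneg ζ.re]
      have b2 : ‖((Real.pi * (2 * k + 1) - m * ζ.im : ℝ) : ℂ) * Complex.I‖ ≤ 2 * Real.pi := by
        rw [norm_mul, Complex.norm_I, mul_one, Complex.norm_real, Real.norm_eq_abs]
        have e2 : m * ζ.im = Real.pi * (m * ζ.im / Real.pi) := by field_simp
        rw [e2, abs_le]
        constructor <;> nlinarith
      have b3 : |ζ.re| + 2 * Real.pi < δ * m := by
        rw [← div_lt_iff₀' hδ]; linarith
      exact lt_of_le_of_lt ((norm_add_le _ _).trans (add_le_add b1 b2)) b3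
    have h1 := hc ξ hd
    rw [dist_eq_norm] at h1
    calc ‖Complex.exp ξ - q‖ = ‖(Complex.exp ξ - Complex.exp ζ) + (Complex.exp ζ - q)‖ := by
          congr 1; ring
      _ ≤ _ := norm_add_le _ _
      _ < ε := by linarith
  · rw [← Complex.exp_nat_mul, hξ, mul_div_cancel₀ _ hmC, Complex.exp_add, ← Complex.ofReal_exp,
      Real.exp_log ht]
    have : ((Real.pi * (2 * k + 1) : ℝ) : ℂ) * Complex.I
        = Real.pi * Complex.I + k * (2 * Real.pi * Complex.I) := by push_cast; ring
    rw [this, Complex.exp_add, Complex.exp_pi_mul_I, Complex.exp_int_mul_two_pi_mul_I]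
    ring


lemma connected_blow_gam (n m : ℕ) (hm : 1 ≤ m) : (blow (gam n) m).Connected := by
  rw [connected_iff_pred]
  have h : Cn (blow (gam n) m) (fun _ => true) := by
    rw [Cn_blow]
    apply Cn_gam_true
    simp only [decide_eq_true_eq]
    exact ⟨⟨0, hm⟩, trivial⟩
  refine ⟨⟨(none, ⟨0, hm⟩)⟩, fun f hf a b => ?_⟩
  exact h.2 f (fun a b _ _ hab => hf a b hab) a b rfl rfl

/-- The roots of node reliability polynomials (of connected finite simple graphs) are
dense in the complex plane. -/
theorem nodeRel_roots_dense :
    ∀ (z : ℂ) (ε : ℝ), 0 < ε →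
      ∃ (n : ℕ) (G : SimpleGraph (Fin n)), G.Connected ∧
        ∃ w : ℂ, ‖w - z‖ < ε ∧ nodeRel G w = 0 := by
  intro z ε hε
  obtain ⟨n, hn, m, hm, t, w, hwq, hwm, hroot⟩ := exists_root_near (1 - z) ε hε
  let e := Fintype.equivFin (Option (Fin n × Bool) × Fin m)
  let H : SimpleGraph (Fin (Fintype.card (Option (Fin n × Bool) × Fin m))) :=
    (blow (gam n) m).comap e.symm
  have he : ∀ a b, H.Adj (e a) (e b) ↔ (blow (gam n) m).Adj a b := by
    intro a b; simp [H]
  let I : blow (gam n) m ≃g H := ⟨e, fun {a b} => he a b⟩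
  refine ⟨_, H, I.connected_iff.1 (connected_blow_gam n m hm), 1 - w, ?_, ?_⟩
  · rw [← norm_neg]
    rw [show -(1 - w - z) = w - (1 - z) by ring]
    exact hwq
  · rw [← nodeRel_iso _ H e he, nodeRel_blow, sub_sub_cancel, hwm, nodeRel_gam n hn]
    have hr : (1 + t - t * (1 + t + t ^ 2) ^ n + t ^ (2 * n + 1)
        + n * (1 + t) * t ^ (2 * n) : ℂ) = 0 := by exact_mod_cast hroot
    obtain ⟨k, rfl⟩ : ∃ k, n = k + 1 := ⟨n - 1, by omega⟩
    have e1 : (1 : ℂ) - (1 - -(t : ℂ)) = -t := by ring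
    rw [e1, show 2 * (k + 1) - 1 = 2 * k + 1 by omega,
      neg_sq, Odd.neg_pow (n := 2 * k + 1) ⟨k, rfl⟩, Even.neg_pow (n := 2 * (k + 1)) ⟨k + 1, by ring⟩, show (1 : ℂ) - -(t : ℂ) = 1 + t by ring]
    rw [← hr]
    ring
end

section
/- The collection of all roots of connected set polynomials of connected graphs is dense in the complex plane: for every z ∈ ℂ and every ε > 0 there exist a connected finite simple graph G and a complex number w with |w − z| < ε and C(G; w) = 0. -/
open scoped Classical

namespace CPD

lemma connPoly_eq_sum {V : Type*} [Fintype V] (G : SimpleGraph V) (x : ℂ) :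
    connPoly G x = ∑ S : Finset V, if (G.induce (S : Set V)).Connected then x ^ S.card else 0 := by
  unfold connPoly connCount
  have hmaps : ∀ S ∈ Finset.univ.filter (fun S : Finset V => (G.induce (S : Set V)).Connected),
      S.card ∈ Finset.Icc 1 (Fintype.card V) := by
    intro S hS
    rw [Finset.mem_filter] at hS
    obtain ⟨⟨v, hv⟩⟩ := hS.2.nonempty
    rw [Finset.mem_Icc]
    exact ⟨Finset.card_pos.2 ⟨v, hv⟩, Finset.card_le_univ S⟩
  rw [← Finset.sum_filter, ← Finset.sum_fiberwise_of_maps_to hmaps]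
  refine Finset.sum_congr rfl fun k _ => ?_
  rw [Finset.sum_congr rfl (g := fun _ => x ^ k)
    (fun S hS => by rw [(Finset.mem_filter.1 hS).2]), Finset.sum_const, nsmul_eq_mul,
    Finset.filter_filter]
  congr 3
  ext S
  simp [and_comm]

lemma ite_cong {p q : Prop} {_ : Decidable p} {_ : Decidable q} {a b : ℂ} (h : p ↔ q) (hab : a = b) :
    (if p then a else 0) = (if q then b else 0) := by
  subst hab
  by_cases hp : p
  · rw [if_pos hp, if_pos (h.1 hp)]
  · rw [if_neg hp, if_neg (fun hq => hp (h.2 hq))]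

lemma connPoly_map {V W : Type*} [Fintype V] [Fintype W] (G : SimpleGraph V) (e : V ≃ W) (x : ℂ) :
    connPoly (G.map e) x = connPoly G x := by
  rw [connPoly_eq_sum, connPoly_eq_sum]
  symm
  refine Fintype.sum_equiv (Equiv.finsetCongr e) _ _ fun S => ?_
  have h : (G.induce (S : Set V)).Connected ↔
      ((G.map e).induce (((Equiv.finsetCongr e) S : Finset W) : Set W)).Connected := by
    apply SimpleGraph.Iso.connected_iff
    refine (SimpleGraph.Iso.map e G).induce ⟨?_, ?_, ?_⟩
    · intro v hv
      have hv' : v ∈ S := hv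
      show e v ∈ ((Equiv.finsetCongr e S : Finset W) : Set W)
      simpa using hv'
    · exact e.injective.injOn
    · intro w hw
      have hw' : w ∈ S.map e.toEmbedding := hw
      obtain ⟨v, hv, rfl⟩ := Finset.mem_map.1 hw'
      exact ⟨v, hv, rfl⟩
  have hcard : ((Equiv.finsetCongr e) S).card = S.card := by simp
  rw [hcard]
  exact ite_cong h rfl

/-- closed predicates under adjacency propagate through connected sets -/
lemma conn_prop {V : Type*} {G : SimpleGraph V} {S : Set V} (h : (G.induce S).Connected)
    (P : V → Prop) (u : V) (hu : u ∈ S) (hPu : P u)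
    (hstep : ∀ v w, v ∈ S → w ∈ S → G.Adj v w → P v → P w) : ∀ w ∈ S, P w := by
  intro w hw
  obtain ⟨p⟩ := h.preconnected ⟨u, hu⟩ ⟨w, hw⟩
  have key : ∀ (a b : S) (p : (G.induce S).Walk a b), P a → P b := by
    intro a b p
    induction p with
    | nil => exact id
    | cons hadj _ ih => exact fun ha => ih (hstep _ _ (Subtype.property _) (Subtype.property _) hadj ha)
  exact key _ _ p hPu

lemma conn_hub {V : Type*} {G : SimpleGraph V} {S : Set V} (c : V) (hc : c ∈ S)
    (h : ∀ v ∈ S, v = c ∨ G.Adj c v ∨ ∃ w ∈ S, G.Adj c w ∧ G.Adj w v) :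
    (G.induce S).Connected := by
  rw [SimpleGraph.connected_iff_exists_forall_reachable]
  refine ⟨⟨c, hc⟩, ?_⟩
  rintro ⟨v, hv⟩
  rcases h v hv with rfl | h | ⟨w, hw, h1, h2⟩
  · exact SimpleGraph.Reachable.refl _
  · exact SimpleGraph.Adj.reachable (by simpa using h)
  · have a1 : (G.induce S).Adj ⟨c, hc⟩ ⟨w, hw⟩ := by simpa using h1
    have a2 : (G.induce S).Adj ⟨w, hw⟩ ⟨v, hv⟩ := by simpa using h2
    exact a1.reachable.trans a2.reachable

/-- Relation for the graph. -/
def rel {M ι κ : Type} (B : ι → Finset κ) : M ⊕ (Unit ⊕ ι × κ) → M ⊕ (Unit ⊕ ι × κ) → Prop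
  | .inl _, _ => True
  | .inr (.inl _), .inr (.inr p) => p.2 ∈ B p.1
  | .inr (.inr p), .inr (.inr q) => p.1 = q.1
  | _, _ => False

/-- The graph: cliques `{i} × κ`, center adjacent to `B i`, dominating clique `M`. -/
def gr (M : Type) {ι κ : Type} (B : ι → Finset κ) : SimpleGraph (M ⊕ (Unit ⊕ ι × κ)) :=
  SimpleGraph.fromRel (rel B)

lemma gr_conn_iff {M ι κ : Type} (B : ι → Finset κ) (S : Set (M ⊕ (Unit ⊕ ι × κ))) :
    ((gr M B).induce S).Connected ↔
      ((∃ a, Sum.inl a ∈ S) ∨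
      ((∀ a, Sum.inl a ∉ S) ∧ Sum.inr (Sum.inl ()) ∈ S ∧
        ∀ i k, Sum.inr (Sum.inr (i, k)) ∈ S → ∃ b ∈ B i, Sum.inr (Sum.inr (i, b)) ∈ S) ∨
      ((∀ a, Sum.inl a ∉ S) ∧ Sum.inr (Sum.inl ()) ∉ S ∧
        ∃ i, (∃ k, Sum.inr (Sum.inr (i, k)) ∈ S) ∧
          ∀ j k, Sum.inr (Sum.inr (j, k)) ∈ S → j = i)) := by
  constructor
  · intro h
    by_cases hM : ∃ a, Sum.inl a ∈ S
    · exact Or.inl hM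
    right
    push Not at hM
    by_cases hc : Sum.inr (Sum.inl ()) ∈ S
    · left
      refine ⟨hM, hc, ?_⟩
      intro i k hik
      by_contra hcon
      push Not at hcon
      have := conn_prop h (fun v => ∃ k, v = Sum.inr (Sum.inr (i, k))) _ hik ⟨k, rfl⟩ ?_ _ hc
      · simp at this
      · rintro v w hv hw hadj ⟨l, rfl⟩
        rcases w with a | u | ⟨j, t⟩
        · exact absurd hw (hM a)
        · simp [gr, rel] at hadj
          exact absurd hv (hcon _ hadj)
        · simp [gr, rel] at hadj
          obtain ⟨_, h | h⟩ := hadj <;> subst h <;> exact ⟨t, rfl⟩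
    · right
      refine ⟨hM, hc, ?_⟩
      obtain ⟨⟨v, hv⟩⟩ := h.nonempty
      rcases v with a | u | ⟨i, k⟩
      · exact absurd hv (hM a)
      · exact absurd hv hc
      refine ⟨i, ⟨k, hv⟩, ?_⟩
      intro j l hjl
      have := conn_prop h (fun v => ∃ k, v = Sum.inr (Sum.inr (i, k))) _ hv ⟨k, rfl⟩ ?_ _ hjl
      · obtain ⟨k', hk'⟩ := this
        simp at hk'
        exact hk'.1
      · rintro v w hv hw hadj ⟨l, rfl⟩
        rcases w with a | u | ⟨j, t⟩
        · exact absurd hw (hM a)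
        · exact absurd hw hc
        · simp [gr, rel] at hadj
          obtain ⟨_, h | h⟩ := hadj <;> subst h <;> exact ⟨t, rfl⟩
  · rintro (⟨a, ha⟩ | ⟨-, hc, h⟩ | ⟨hM, hc, i, ⟨k, hk⟩, h⟩)
    · refine conn_hub _ ha fun v hv => ?_
      by_cases hva : v = Sum.inl a
      · exact Or.inl hva
      · right; left
        simp [gr, rel, Ne.symm hva]
    · refine conn_hub _ hc fun v hv => ?_
      rcases v with a | u | ⟨i, k⟩
      · right; left; simp [gr, rel]
      · left; rfl
      · right
        obtain ⟨b, hb, hbS⟩ := h i k hv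
        by_cases hbk : b = k
        · left; subst hbk; simp [gr, rel, hb]
        · right; exact ⟨_, hbS, by simp [gr, rel, hb], by simp [gr, rel, hbk]⟩
    · refine conn_hub _ hk fun v hv => ?_
      rcases v with a | u | ⟨j, l⟩
      · exact absurd hv (hM a)
      · exact absurd hv hc
      · obtain rfl := h j l hv
        by_cases hkl : k = l
        · left; rw [hkl]
        · right; left; simp [gr, rel, hkl]

lemma gr_connected {M ι κ : Type} (B : ι → Finset κ) (hB : ∀ i, (B i).Nonempty) :
    (gr M B).Connected := by
  rw [← (SimpleGraph.induceUnivIso (gr M B)).connected_iff, gr_conn_iff]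
  by_cases hM : Nonempty M
  · left; simp
  · right; left
    refine ⟨fun a => absurd ⟨a⟩ hM, trivial, fun i k _ => ?_⟩
    obtain ⟨b, hb⟩ := hB i
    exact ⟨b, hb, trivial⟩

lemma sum_all (α : Type*) [Fintype α] (x : ℂ) :
    ∑ S : Finset α, x ^ S.card = (1 + x) ^ Fintype.card α := by
  have := Fintype.sum_pow_mul_eq_add_pow α x 1
  simpa [add_comm] using this

lemma sum_powerset {α : Type*} (s : Finset α) (x : ℂ) :
    ∑ S ∈ s.powerset, x ^ S.card = (1 + x) ^ s.card := by
  have := Finset.sum_pow_mul_eq_add_pow x 1 s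
  simpa [add_comm] using this

/-- Fibers of a set in a product. -/
noncomputable def fib {ι κ : Type} [Fintype ι] [Fintype κ] : Finset (ι × κ) ≃ (ι → Finset κ) where
  toFun T i := Finset.univ.filter fun k => (i, k) ∈ T
  invFun f := Finset.univ.filter fun p => p.2 ∈ f p.1
  left_inv T := by ext; simp
  right_inv f := by ext; simp

lemma mem_fib {ι κ : Type} [Fintype ι] [Fintype κ] (T : Finset (ι × κ)) (i : ι) (k : κ) :
    k ∈ fib T i ↔ (i, k) ∈ T := by simp [fib]

lemma card_fib {ι κ : Type} [Fintype ι] [Fintype κ] (T : Finset (ι × κ)) :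
    T.card = ∑ i, (fib T i).card := by
  rw [Finset.card_eq_sum_card_fiberwise (f := Prod.fst) (t := Finset.univ) (by simp)]
  refine Finset.sum_congr rfl fun i _ => ?_
  refine Finset.card_bij' (fun p _ => p.2) (fun k _ => (i, k)) ?_ ?_ ?_ ?_
  · rintro ⟨j, k⟩ h
    simp at h
    obtain ⟨h, rfl⟩ := h
    simpa [mem_fib] using h
  · intro k h
    simpa [mem_fib] using h
  · rintro ⟨j, k⟩ h
    simp at h
    simp [h.2]
  · intros; rfl

lemma sum_leg {κ : Type} [Fintype κ] (B : Finset κ) (x : ℂ) :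
    ∑ K : Finset κ, (if (∀ k ∈ K, ∃ b ∈ B, b ∈ K) then x ^ K.card else 0) =
      (1 + x) ^ Fintype.card κ - (1 + x) ^ (Fintype.card κ - B.card) + 1 := by
  have h : ∀ K : Finset κ, (if (∀ k ∈ K, ∃ b ∈ B, b ∈ K) then x ^ K.card else 0) =
      x ^ K.card - (if K ∈ Bᶜ.powerset then x ^ K.card else 0) + (if K = ∅ then 1 else 0) := by
    intro K
    rcases K.eq_empty_or_nonempty with rfl | hK
    · simp
    · have h2 : (K ∈ Bᶜ.powerset) ↔ ¬ (∀ k ∈ K, ∃ b ∈ B, b ∈ K) := by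
        rw [Finset.mem_powerset]
        constructor
        · intro h h'
          obtain ⟨k, hk⟩ := hK
          obtain ⟨b, hb, hbK⟩ := h' k hk
          exact (Finset.mem_compl.1 (h hbK)) hb
        · intro h k hk
          push Not at h
          obtain ⟨_, _, h⟩ := h
          rw [Finset.mem_compl]
          exact fun hb => h k hb hk
      rw [if_neg hK.ne_empty]
      by_cases h3 : (∀ k ∈ K, ∃ b ∈ B, b ∈ K)
      · rw [if_pos h3, if_neg (fun h => h2.1 h h3)]; ring
      · rw [if_neg h3, if_pos (h2.2 h3)]; ring
  simp only [h, Finset.sum_add_distrib, Finset.sum_sub_distrib, sum_all]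
  rw [← Finset.sum_filter]
  simp only [Finset.filter_univ_mem, sum_powerset, Finset.card_compl]
  simp

lemma sum_center {ι κ : Type} [Fintype ι] [Fintype κ] (B : ι → Finset κ) (x : ℂ) :
    ∑ T : Finset (ι × κ), (if (∀ i k, (i, k) ∈ T → ∃ b ∈ B i, (i, b) ∈ T) then x ^ T.card else 0) =
      ∏ i, ((1 + x) ^ Fintype.card κ - (1 + x) ^ (Fintype.card κ - (B i).card) + 1) := by
  simp only [← sum_leg]
  rw [Finset.prod_univ_sum, Fintype.piFinset_univ]
  refine Fintype.sum_equiv fib _ _ fun T => ?_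
  rw [card_fib]
  simp only [← mem_fib]
  by_cases h : ∀ i k, k ∈ fib T i → ∃ b ∈ B i, b ∈ fib T i
  · rw [if_pos h, Finset.prod_congr rfl (fun i _ => if_pos (h i)), Finset.prod_pow_eq_pow_sum]
  · rw [if_neg h]
    push Not at h
    obtain ⟨i, k, hk, h⟩ := h
    symm
    refine Finset.prod_eq_zero (Finset.mem_univ i) (if_neg ?_)
    intro h'
    obtain ⟨b, hb, hbk⟩ := h' k hk
    exact h b hb hbk

lemma sum_single {ι κ : Type} [Fintype ι] [Fintype κ] (x : ℂ) :
    ∑ T : Finset (ι × κ), (if (∃ i, (∃ k, (i, k) ∈ T) ∧ ∀ j k, (j, k) ∈ T → j = i)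
      then x ^ T.card else 0) =
      Fintype.card ι * ((1 + x) ^ Fintype.card κ - 1) := by
  have h1 : ∀ T : Finset (ι × κ), (if (∃ i, (∃ k, (i, k) ∈ T) ∧ ∀ j k, (j, k) ∈ T → j = i)
      then x ^ T.card else 0) =
      ∑ i, (if ((∃ k, (i, k) ∈ T) ∧ ∀ j k, (j, k) ∈ T → j = i) then x ^ T.card else 0) := by
    intro T
    by_cases h : ∃ i, (∃ k, (i, k) ∈ T) ∧ ∀ j k, (j, k) ∈ T → j = i
    · rw [if_pos h]
      obtain ⟨i, ⟨k, hk⟩, hi⟩ := h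
      rw [Finset.sum_eq_single i, if_pos ⟨⟨k, hk⟩, hi⟩]
      · intro j _ hj
        refine if_neg ?_
        rintro ⟨⟨l, hl⟩, _⟩
        exact hj (hi j l hl)
      · simp
    · rw [if_neg h]
      symm
      refine Finset.sum_eq_zero fun i _ => if_neg fun hi => h ⟨i, hi⟩
  simp only [h1]
  rw [Finset.sum_comm]
  have h2 : ∀ i : ι, ∑ T : Finset (ι × κ),
      (if ((∃ k, (i, k) ∈ T) ∧ ∀ j k, (j, k) ∈ T → j = i) then x ^ T.card else 0) =
      (1 + x) ^ Fintype.card κ - 1 := by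
    intro i
    rw [← Finset.sum_filter]
    have h3 : ∑ K ∈ Finset.univ.filter (fun K : Finset κ => K ≠ ∅), x ^ K.card
        = (1 + x) ^ Fintype.card κ - 1 := by
      rw [← sum_all, Finset.filter_ne', ← Finset.sum_erase_add _ _ (Finset.mem_univ ∅)]
      simp
    rw [← h3]
    symm
    refine Finset.sum_bij (fun K _ => K.map ⟨fun k => (i, k), fun a b h => by simpa using h⟩)
      ?_ ?_ ?_ ?_
    · intro K hK
      simp at hK
      obtain ⟨k, hk⟩ := Finset.nonempty_iff_ne_empty.2 hK
      rw [Finset.mem_filter]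
      refine ⟨Finset.mem_univ _, ⟨k, Finset.mem_map.2 ⟨k, hk, rfl⟩⟩, ?_⟩
      intro j l h
      obtain ⟨l', _, h⟩ := Finset.mem_map.1 h
      exact (congrArg Prod.fst h).symm
    · intro K _ L _ h
      exact Finset.map_injective _ h
    · intro T hT
      simp at hT
      obtain ⟨⟨k, hk⟩, hT⟩ := hT
      refine ⟨fib T i, ?_, ?_⟩
      · simp
        exact Finset.ne_empty_of_mem ((mem_fib T i k).2 hk)
      · ext ⟨j, l⟩
        rw [Finset.mem_map]
        constructor
        · rintro ⟨l', h, h'⟩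
          rw [← h']
          exact (mem_fib T i l').1 h
        · intro h
          obtain rfl := hT j l h
          exact ⟨l, (mem_fib T j l).2 h, rfl⟩
    · intros; simp
  simp only [h2, Finset.sum_const, Finset.card_univ, nsmul_eq_mul]

lemma sum_disj {α β : Type} [Fintype α] [Fintype β] (f : Finset (α ⊕ β) → ℂ) :
    ∑ S, f S = ∑ A : Finset α, ∑ U : Finset β, f (A.disjSum U) := by
  rw [← (Finset.sumEquiv (α := α) (β := β)).symm.toEquiv.sum_comp, Fintype.sum_prod_type]
  rfl

lemma gr_poly {M ι κ : Type} [Fintype M] [Fintype ι] [Fintype κ] (B : ι → Finset κ) (x : ℂ) :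
    connPoly (gr M B) x =
      ((1 + x) ^ Fintype.card M - 1) * (1 + x) ^ (1 + Fintype.card ι * Fintype.card κ) +
      x * ∏ i, ((1 + x) ^ Fintype.card κ - (1 + x) ^ (Fintype.card κ - (B i).card) + 1) +
      Fintype.card ι * ((1 + x) ^ Fintype.card κ - 1) := by
  rw [connPoly_eq_sum, sum_disj, ← Finset.sum_erase_add _ _ (Finset.mem_univ ∅)]
  have e1 : ∑ A ∈ Finset.univ.erase (∅ : Finset M), x ^ A.card = (1 + x) ^ Fintype.card M - 1 := by
    rw [← sum_all, ← Finset.sum_erase_add _ _ (Finset.mem_univ ∅)]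
    simp
  rw [add_assoc]
  congr 1
  · rw [← e1, Finset.sum_mul]
    refine Finset.sum_congr rfl fun A hA' => ?_
    have e2 := sum_all (Unit ⊕ ι × κ) x
    simp only [Fintype.card_sum, Fintype.card_prod, Fintype.card_unit] at e2
    rw [← e2, Finset.mul_sum]
    refine Finset.sum_congr rfl fun U _ => ?_
    obtain ⟨a, ha⟩ := Finset.nonempty_iff_ne_empty.2 (Finset.ne_of_mem_erase hA')
    rw [if_pos ((gr_conn_iff B _).2 (Or.inl ⟨a, by simpa using ha⟩))]
    rw [Finset.card_disjSum, pow_add]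
  · rw [sum_disj]
    have hu : (Finset.univ : Finset (Finset Unit)) = {∅, {()}} := by
      ext s
      simp only [Finset.mem_univ, Finset.mem_insert, Finset.mem_singleton, true_iff]
      rcases s.eq_empty_or_nonempty with h | ⟨⟨⟩, h⟩
      · exact Or.inl h
      · right
        ext ⟨⟩
        simp [h]
    rw [hu, Finset.sum_pair (by simp), add_comm]
    congr 1
    · rw [← sum_center, Finset.mul_sum]
      refine Finset.sum_congr rfl fun T _ => ?_
      rw [mul_ite, mul_zero]
      refine ite_cong ((gr_conn_iff B _).trans ?_) ?_
      · simp
      · simp [pow_add]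
    · rw [← sum_single]
      refine Finset.sum_congr rfl fun T _ => ?_
      refine ite_cong ((gr_conn_iff B _).trans ?_) ?_
      · simp
      · simp

lemma exists_graph (m r s a h : ℕ) (ha : a < h) :
    ∃ (n : ℕ) (G : SimpleGraph (Fin n)), G.Connected ∧ ∀ y : ℂ, connPoly G (y - 1) =
      (y ^ m - 1) * y ^ (1 + (r + s) * h) + (y - 1) * ((y ^ h - y ^ a + 1) ^ r * (y ^ h) ^ s) +
      (r + s) * (y ^ h - 1) := by
  obtain ⟨B₀, -, hB₀⟩ := Finset.exists_subset_card_eq (s := (Finset.univ : Finset (Fin h)))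
    (n := h - a) (by simp)
  let B : Fin r ⊕ Fin s → Finset (Fin h) := Sum.elim (fun _ => B₀) (fun _ => Finset.univ)
  let e := Fintype.equivFin (Fin m ⊕ (Unit ⊕ (Fin r ⊕ Fin s) × Fin h))
  refine ⟨_, (gr (Fin m) B).map e, ?_, ?_⟩
  · rw [← (SimpleGraph.Iso.map e _).connected_iff]
    refine gr_connected B ?_
    rintro (i | i)
    · exact Finset.card_pos.1 (by show 0 < B₀.card; omega)
    · exact ⟨⟨a, ha⟩, Finset.mem_univ _⟩
  · intro y
    rw [connPoly_map, gr_poly]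
    have : h - (h - a) = a := by omega
    simp [B, hB₀, this]

open Filter Topology Metric

lemma local_log {f : ℂ → ℂ} {z : ℂ} (hf : AnalyticAt ℂ f z) (h0 : f z ≠ 0) :
    ∃ L : ℂ → ℂ, AnalyticAt ℂ L z ∧ ∀ᶠ w in 𝓝 z, Complex.exp (L w) = f w := by
  refine ⟨fun w => Complex.log (f w / f z) + Complex.log (f z), ?_, ?_⟩
  · refine AnalyticAt.add (AnalyticAt.clog (hf.div analyticAt_const h0) ?_) analyticAt_const
    rw [div_self h0]
    exact Complex.one_mem_slitPlane
  · filter_upwards [hf.continuousAt.eventually_ne h0] with w hw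
    rw [Complex.exp_add, Complex.exp_log (div_ne_zero hw h0), Complex.exp_log h0,
      div_mul_cancel₀ _ h0]

lemma re_log_eq {a b : ℂ} (h : Complex.exp a = b) : a.re = Real.log ‖b‖ := by
  rw [← h, Complex.norm_exp, Real.log_exp]

lemma logDeriv_of_exp {f L : ℂ → ℂ} {z : ℂ} (hL : AnalyticAt ℂ L z)
    (h : ∀ᶠ w in 𝓝 z, Complex.exp (L w) = f w) : logDeriv f z = deriv L z := by
  have h1 : f =ᶠ[𝓝 z] fun w => Complex.exp (L w) := by
    filter_upwards [h] with w hw using hw.symm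
  rw [logDeriv_apply, h1.deriv_eq, h1.eq_of_nhds]
  rw [deriv_cexp hL.differentiableAt, mul_comm, mul_div_assoc, div_self (Complex.exp_ne_zero _),
    mul_one]

lemma core {f g : ℂ → ℂ} {z : ℂ} (hf : AnalyticAt ℂ f z) (hg : AnalyticAt ℂ g z)
    (hf0 : f z ≠ 0) (hg0 : g z ≠ 0) (α : ℝ) (hα : 0 < α)
    (hre : Real.log ‖f z‖ + α * Real.log ‖g z‖ = 0)
    (hnc : ¬ ∀ᶠ w in 𝓝 z, logDeriv f w + α * logDeriv g w = 0)
    (κ : ℕ → ℝ) (hκ0 : ∀ n, 1 ≤ n → 0 < κ n)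
    (hκ : Tendsto (fun n : ℕ => Real.log (κ n) / n) atTop (𝓝 0))
    (E : ℕ → ℂ → ℂ) (c : ℂ) (hc : c ≠ 0) (ρ : ℝ) (hρ : 0 < ρ)
    (hE : ∀ᶠ n in atTop, ∀ w ∈ ball z ρ, DifferentiableAt ℂ (E n) w ∧ ‖E n w - c‖ ≤ ‖c‖ / 2)
    (ε : ℝ) (hε : 0 < ε) :
    ∃ n : ℕ, 1 ≤ n ∧ ∃ w, ‖w - z‖ < ε ∧ f w ^ n * g w ^ ⌊α * n⌋₊ = κ n * E n w := by
  obtain ⟨Lf, hLf, hef⟩ := local_log hf hf0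
  obtain ⟨Lg, hLg, heg⟩ := local_log hg hg0
  set φ : ℂ → ℂ := fun w => Lf w + α * Lg w with hφ
  have hφa : AnalyticAt ℂ φ z := hLf.add (analyticAt_const.mul hLg)
  have hne : ∀ᶠ w in 𝓝[≠] z, φ w ≠ φ z := by
    rcases hφa.eventually_eq_or_eventually_ne (analyticAt_const (v := φ z)) with h | h
    · exfalso
      apply hnc
      filter_upwards [h.eventually_nhds, hef.eventually_nhds, heg.eventually_nhds,
        hLf.eventually_analyticAt, hLg.eventually_analyticAt] with w h1 h2 h3 h4 h5
      rw [logDeriv_of_exp h4 h2, logDeriv_of_exp h5 h3]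
      have h6 : deriv φ w = 0 := by
        rw [Filter.EventuallyEq.deriv_eq (f := fun _ => φ z) h1]
        simp
      rw [← h6, hφ, deriv_fun_add h4.differentiableAt
        (h5.differentiableAt.const_mul _), deriv_const_mul _ h5.differentiableAt]
    · exact h
  rw [eventually_nhdsWithin_iff] at hne
  obtain ⟨R, hR0, hR⟩ := Metric.eventually_nhds_iff_ball.1 (hne.and (hef.and (heg.and
    (hLf.eventually_analyticAt.and hLg.eventually_analyticAt))))
  -- radii
  obtain ⟨R1, hR10, hR1⟩ : ∃ R1, 0 < R1 ∧ R1 < R ∧ R1 < ρ ∧ R1 < ε :=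
    ⟨min R (min ρ ε) / 2, by positivity, by
      have h1 := min_le_left R (min ρ ε)
      have h2 := min_le_right R (min ρ ε)
      have h3 := min_le_left ρ ε
      have h4 := min_le_right ρ ε
      have h5 : 0 < min R (min ρ ε) := by positivity
      exact ⟨by linarith, by linarith, by linarith⟩⟩
  set r := R1 / 2 with hr
  have hr0 : 0 < r := by positivity
  have hrR1 : r < R1 := by rw [hr]; linarith
  have hcb : closedBall z r ⊆ ball z R1 := closedBall_subset_ball hrR1
  have hbR : ball z R1 ⊆ ball z R := ball_subset_ball hR1.1.le
  have hbρ : ball z R1 ⊆ ball z ρ := ball_subset_ball hR1.2.1.le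
  -- minimum on sphere
  have hφc : ContinuousOn φ (closedBall z r) := fun w hw => by
    have := (hR w (hbR (hcb hw))).2.2.2
    exact (this.1.continuousAt.add (continuousAt_const.mul this.2.continuousAt)).continuousWithinAt
  obtain ⟨δ, hδ0, hδ⟩ : ∃ δ, 0 < δ ∧ ∀ w ∈ sphere z r, δ ≤ ‖φ w - φ z‖ := by
    have hcont : ContinuousOn (fun w => ‖φ w - φ z‖) (sphere z r) :=
      ((hφc.mono sphere_subset_closedBall).sub continuousOn_const).norm
    obtain ⟨w, hw, hmin⟩ := (isCompact_sphere z r).exists_isMinOn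
      (NormedSpace.sphere_nonempty.2 hr0.le) hcont
    refine ⟨_, ?_, fun v hv => hmin hv⟩
    have hwz : w ≠ z := by
      rintro rfl
      simp at hw
      linarith
    exact norm_pos_iff.2 (sub_ne_zero.2 ((hR w (hbR (hcb (sphere_subset_closedBall hw)))).1 hwz))
  obtain ⟨K, hK⟩ : ∃ K, ∀ w ∈ closedBall z r, ‖Lg w‖ ≤ K := by
    apply (isCompact_closedBall z r).exists_bound_of_continuousOn
    exact fun w hw => (hR w (hbR (hcb hw))).2.2.2.2.continuousAt.continuousWithinAt
  -- the errors
  have hs : Tendsto (fun n : ℕ => (⌊α * n⌋₊ : ℝ) / n) atTop (𝓝 α) :=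
    (tendsto_nat_floor_mul_div_atTop hα.le).comp tendsto_natCast_atTop_atTop
  have hinv : Tendsto (fun n : ℕ => (1 + ‖Complex.log c‖) / (n : ℝ)) atTop (𝓝 0) :=
    tendsto_const_nhds.div_atTop tendsto_natCast_atTop_atTop
  have hpi : Tendsto (fun n : ℕ => Real.pi / (n : ℝ)) atTop (𝓝 0) :=
    tendsto_const_nhds.div_atTop tendsto_natCast_atTop_atTop
  have hη : Tendsto (fun n : ℕ => |(⌊α * n⌋₊ : ℝ) / n - α| * K + |Real.log (κ n) / n|
      + (1 + ‖Complex.log c‖) / (n : ℝ)) atTop (𝓝 0) := by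
    have h1 : Tendsto (fun n : ℕ => |(⌊α * n⌋₊ : ℝ) / n - α| * K) atTop (𝓝 0) := by
      have := ((hs.sub_const α).abs).mul_const K
      simpa using this
    have h2 := hκ.abs
    rw [abs_zero] at h2
    simpa using (h1.add h2).add hinv
  have hδ8 : 0 < δ / 8 := by positivity
  obtain ⟨n, hEn, hηn, hpin, hn1⟩ := (hE.and ((hη.eventually_lt_const hδ8).and
    ((hpi.eventually_lt_const hδ8).and (eventually_ge_atTop 1)))).exists
  have hn0 : (0 : ℝ) < n := by exact_mod_cast hn1
  have hnC : (n : ℂ) ≠ 0 := by exact_mod_cast hn0.ne'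
  refine ⟨n, hn1, ?_⟩
  set s := ⌊α * n⌋₊ with hsdef
  set ψ : ℂ → ℂ := fun w => Lf w + ((s : ℝ) / n : ℝ) * Lg w - (Real.log (κ n) / n : ℝ)
    - (Complex.log (E n w / c) + Complex.log c) / n with hψ
  have hEc : ∀ w ∈ ball z R1, ‖E n w / c - 1‖ ≤ 1 / 2 := by
    intro w hw
    have := (hEn w (hbρ hw)).2
    rw [div_sub_one hc, norm_div, div_le_iff₀ (norm_pos_iff.2 hc)]
    linarith
  have hslit : ∀ w ∈ ball z R1, E n w / c ∈ Complex.slitPlane := by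
    intro w hw
    have := Complex.mem_slitPlane_of_norm_lt_one (z := E n w / c - 1)
      (lt_of_le_of_lt (hEc w hw) (by norm_num))
    simpa using this
  have hψd : DifferentiableOn ℂ ψ (ball z R1) := by
    intro w hw
    have h1 := (hR w (hbR hw)).2.2.2
    have h2 : DifferentiableAt ℂ (fun w => Complex.log (E n w / c)) w :=
      DifferentiableAt.clog ((hEn w (hbρ hw)).1.div_const c) (hslit w hw)
    exact ((((h1.1.differentiableAt.add (h1.2.differentiableAt.const_mul _)).sub_const _).sub
      ((h2.add_const _).div_const _))).differentiableWithinAt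
  have hclose : ∀ w ∈ closedBall z r, ‖ψ w - φ w‖ ≤ δ / 8 := by
    intro w hw
    have e : ψ w - φ w = ((((s : ℝ) / n - α : ℝ) : ℂ) * Lg w - ((Real.log (κ n) / n : ℝ) : ℂ))
        - (Complex.log (E n w / c) + Complex.log c) / n := by
      simp only [hψ, hφ]
      push_cast
      ring
    rw [e]
    refine le_trans ?_ hηn.le
    refine (norm_sub_le _ _).trans (add_le_add ((norm_sub_le _ _).trans (add_le_add ?_ ?_)) ?_)
    · rw [norm_mul, Complex.norm_real, Real.norm_eq_abs]
      exact mul_le_mul_of_nonneg_left (hK w hw) (abs_nonneg _)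
    · rw [Complex.norm_real, Real.norm_eq_abs]
    · rw [norm_div, Complex.norm_natCast]
      refine div_le_div_of_nonneg_right ?_ hn0.le
      refine (norm_add_le _ _).trans (add_le_add ?_ le_rfl)
      have h1 := hEc w (hcb hw)
      have := Complex.norm_log_one_add_half_le_self h1
      rw [add_sub_cancel] at this
      linarith
  have hzc : z ∈ closedBall z r := mem_closedBall_self hr0.le
  have hsph : ∀ w ∈ sphere z r, 3 * δ / 4 ≤ ‖ψ w - ψ z‖ := by
    intro w hw
    have h1 := hclose w (sphere_subset_closedBall hw)
    have h2 := hclose z hzc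
    have h3 := hδ w hw
    have h4 : ‖φ w - φ z‖ ≤ ‖ψ w - ψ z‖ + ‖ψ w - φ w‖ + ‖ψ z - φ z‖ := by
      have : φ w - φ z = (ψ w - ψ z) - (ψ w - φ w) + (ψ z - φ z) := by ring
      rw [this]
      exact (norm_add_le _ _).trans (add_le_add (norm_sub_le _ _) le_rfl)
    linarith
  have hfreq : ∃ᶠ w in 𝓝 z, ψ w ≠ ψ z := by
    intro hcon
    simp only [not_not] at hcon
    have han : AnalyticOnNhd ℂ ψ (ball z R1) := hψd.analyticOnNhd isOpen_ball
    have heq := han.eqOn_of_preconnected_of_eventuallyEq (g := fun _ => ψ z) analyticOnNhd_const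
      (convex_ball z R1).isPreconnected (mem_ball_self hR10) hcon
    obtain ⟨w, hw⟩ := NormedSpace.sphere_nonempty (x := z).2 hr0.le
    have h1 := hsph w hw
    rw [heq (hcb (sphere_subset_closedBall hw))] at h1
    simp at h1
    linarith
  have himg := DiffContOnCl.ball_subset_image_closedBall
    (f := ψ) (z₀ := z) (r := r) (ε := 3 * δ / 4) ?_ hr0 hsph hfreq
  swap
  · apply DifferentiableOn.diffContOnCl
    rw [closure_ball z hr0.ne']
    exact hψd.mono hcb
  -- target
  have hφre : (φ z).re = 0 := by
    have h1 := re_log_eq hef.self_of_nhds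
    have h2 := re_log_eq heg.self_of_nhds
    simp [hφ, h1, h2, hre]
  set k : ℤ := round (n * (φ z).im / (2 * Real.pi)) with hk
  set τ : ℂ := (2 * Real.pi * k / n : ℝ) * Complex.I with hτ
  have hτφ : ‖τ - φ z‖ ≤ δ / 8 := by
    have e1 : φ z = ((φ z).im : ℝ) * Complex.I := by
      apply Complex.ext <;> simp [hφre]
    have e2 : τ - φ z = ((2 * Real.pi * k / n - (φ z).im : ℝ) : ℂ) * Complex.I := by
      rw [hτ]; nth_rewrite 1 [e1]; push_cast; ring
    rw [e2, norm_mul, Complex.norm_I, mul_one, Complex.norm_real, Real.norm_eq_abs]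
    have h1 := abs_sub_round (n * (φ z).im / (2 * Real.pi))
    rw [← hk, abs_sub_comm] at h1
    have e3 : 2 * Real.pi * k / n - (φ z).im =
        (2 * Real.pi / n) * (k - n * (φ z).im / (2 * Real.pi)) := by
      have := Real.pi_ne_zero
      field_simp
    rw [e3, abs_mul, abs_of_pos (by positivity)]
    calc 2 * Real.pi / n * |k - n * (φ z).im / (2 * Real.pi)| ≤ 2 * Real.pi / n * (1 / 2) := by
          gcongr
      _ = Real.pi / n := by ring
      _ ≤ δ / 8 := hpin.le
  have hτ_mem : τ ∈ ball (ψ z) (3 * δ / 4 / 2) := by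
    rw [mem_ball, dist_eq_norm]
    have h2 := hclose z hzc
    have : τ - ψ z = (τ - φ z) - (ψ z - φ z) := by ring
    rw [this]
    have := norm_sub_le (τ - φ z) (ψ z - φ z)
    linarith
  obtain ⟨w, hw, hwτ⟩ := himg hτ_mem
  refine ⟨w, ?_, ?_⟩
  · rw [← dist_eq_norm]
    have : dist w z ≤ r := hw
    linarith [hR1.2.2]
  · have hwb := hcb hw
    have h1 := (hR w (hbR hwb)).2
    have hE0 : E n w / c ≠ 0 := Complex.slitPlane_ne_zero (hslit w hwb)
    have e1 : (n : ℂ) * Lf w + s * Lg w = (k * (2 * Real.pi * Complex.I)) + ((Real.log (κ n) : ℝ) : ℂ)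
        + (Complex.log (E n w / c) + Complex.log c) := by
      have e2 : (n : ℂ) * ψ w = n * τ := by rw [hwτ]
      simp only [hψ, hτ] at e2
      push_cast at e2
      have e3 : (n : ℂ) * (Lf w + (s : ℂ) / n * Lg w - (Real.log (κ n) : ℂ) / n
          - (Complex.log (E n w / c) + Complex.log c) / n) =
          n * Lf w + s * Lg w - (Real.log (κ n) : ℂ) - (Complex.log (E n w / c) + Complex.log c) := by
        field_simp
      have e4 : (n : ℂ) * (2 * Real.pi * k / n * Complex.I) = k * (2 * Real.pi * Complex.I) := by
        field_simp
      rw [e3, e4] at e2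
      linear_combination e2
    have e5 := congrArg Complex.exp e1
    rw [Complex.exp_add, Complex.exp_add, Complex.exp_add, Complex.exp_add,
      Complex.exp_int_mul_two_pi_mul_I, Complex.exp_log hE0, Complex.exp_log hc,
      Complex.exp_nat_mul, Complex.exp_nat_mul, h1.1, h1.2.1, ← Complex.ofReal_exp,
      Real.exp_log (hκ0 n hn1), div_mul_cancel₀ _ hc, one_mul] at e5
    exact e5

lemma pos_re {u v : ℂ} (hu : u ≠ 0) (hv : v.im ≠ 0) : ∃ n : ℕ, 0 < (u * v ^ n).re := by
  by_contra hcon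
  push Not at hcon
  have hv0 : v ≠ 0 := by rintro rfl; simp at hv
  have hvn : 0 < ‖v‖ := norm_pos_iff.2 hv0
  set t : ℂ := ((‖v‖⁻¹ : ℝ) : ℂ) * v with ht
  have htn : ‖t‖ = 1 := by
    rw [ht, norm_mul, Complex.norm_real, norm_inv, norm_norm, inv_mul_cancel₀ hvn.ne']
  have htim : t.im ≠ 0 := by
    rw [ht, Complex.im_ofReal_mul]
    exact mul_ne_zero (inv_ne_zero hvn.ne') hv
  have ht1 : t ≠ 1 := by
    intro h; rw [h] at htim; simp at htim
  have hneg : ∀ n : ℕ, (u * t ^ n).re ≤ 0 := by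
    intro n
    have : u * t ^ n = (((‖v‖⁻¹) ^ n : ℝ) : ℂ) * (u * v ^ n) := by
      rw [ht, mul_pow]; push_cast; ring
    rw [this, Complex.re_ofReal_mul]
    exact mul_nonpos_of_nonneg_of_nonpos (by positivity) (hcon n)
  have hsum : Summable fun n : ℕ => -(u * t ^ n).re := by
    refine summable_of_sum_range_le (c := ‖u‖ * (2 / ‖t - 1‖)) (fun n => by linarith [hneg n]) ?_
    intro N
    have e : ∑ i ∈ Finset.range N, -(u * t ^ i).re = (-(u * ((t ^ N - 1) / (t - 1)))).re := by
      rw [← geom_sum_eq ht1, Finset.mul_sum, Finset.sum_neg_distrib, Complex.neg_re, Complex.re_sum]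
    rw [e]
    refine (Complex.re_le_norm _).trans ?_
    rw [norm_neg, norm_mul, norm_div]
    gcongr
    refine (norm_sub_le _ _).trans ?_
    rw [norm_pow, htn]; norm_num
  have h0 : Tendsto (fun n : ℕ => (u * t ^ n).re) atTop (𝓝 0) := by
    simpa using hsum.tendsto_atTop_zero.neg
  have h1 : Tendsto (fun n : ℕ => (u * t ^ (n + 1)).re) atTop (𝓝 0) :=
    h0.comp (tendsto_add_atTop_nat 1)
  have h2 : Tendsto (fun n : ℕ => (u * t ^ n).im) atTop (𝓝 0) := by
    have h3 : Tendsto (fun n : ℕ => ((u * t ^ n).re * t.re - (u * t ^ (n + 1)).re) / t.im)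
        atTop (𝓝 0) := by
      simpa using ((h0.mul_const t.re).sub h1).div_const t.im
    refine h3.congr fun n => ?_
    rw [pow_succ, ← mul_assoc, Complex.mul_re (u * t ^ n) t]
    field_simp
    ring
  have h4 : Tendsto (fun _ : ℕ => ‖u‖ ^ 2) atTop (𝓝 0) := by
    have h5 := (h0.mul h0).add (h2.mul h2)
    simp only [mul_zero, add_zero] at h5
    refine h5.congr fun n => ?_
    rw [← Complex.normSq_apply, Complex.normSq_eq_norm_sq, norm_mul, norm_pow, htn]
    simp
  have h6 := tendsto_nhds_unique h4 tendsto_const_nhds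
  have : 0 < ‖u‖ := norm_pos_iff.2 hu
  nlinarith

/-- The leg polynomial. -/
noncomputable def Q (h a : ℕ) (w : ℂ) : ℂ := w ^ h - w ^ a + 1

lemma Q_analytic (h a : ℕ) (z : ℂ) : AnalyticAt ℂ (Q h a) z := by
  unfold Q; fun_prop

lemma logDeriv_Q (h a : ℕ) (hh : 1 ≤ h) (ha : 1 ≤ a) {w : ℂ} (hw : w ≠ 0) :
    logDeriv (Q h a) w = ((h : ℂ) * w ^ h - a * w ^ a) / (w * Q h a w) := by
  have hd : HasDerivAt (Q h a) ((h : ℂ) * w ^ (h - 1) - a * w ^ (a - 1)) w :=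
    (((hasDerivAt_pow h w).sub (hasDerivAt_pow a w)).add_const 1)
  rw [logDeriv_apply, hd.deriv]
  obtain ⟨h', rfl⟩ := Nat.exists_eq_add_of_le' hh
  obtain ⟨a', rfl⟩ := Nat.exists_eq_add_of_le' ha
  simp only [Nat.add_sub_cancel]
  rw [← mul_div_mul_left _ _ hw]
  congr 1
  ring

lemma nonconst (h a : ℕ) (hh : 1 ≤ h) (ha : 1 ≤ a) (β z : ℂ)
    (hβ : ∀ᶠ w in 𝓝 z, ((h : ℂ) * w ^ h - a * w ^ a) + β * Q h a w = 0) : β = 0 := by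
  have h1 : AnalyticOnNhd ℂ (fun w => ((h : ℂ) * w ^ h - a * w ^ a) + β * Q h a w) Set.univ := by
    intro w _
    have := Q_analytic h a w
    fun_prop
  have h2 := h1.eq_of_eventuallyEq (g := fun _ => 0) analyticOnNhd_const hβ
  have h3 := congrFun h2 0
  have hh' : h ≠ 0 := by omega
  have ha' : a ≠ 0 := by omega
  simpa [Q, hh', ha'] using h3

lemma logDeriv_pow_id (h : ℕ) (w : ℂ) : logDeriv (fun w : ℂ => w ^ h) w = h / w := by
  rw [logDeriv_fun_pow differentiableAt_fun_id]
  simp [logDeriv_apply, div_eq_mul_inv]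

lemma log_tendsto (α : ℝ) (hα : 0 < α) :
    Tendsto (fun n : ℕ => Real.log ((n : ℝ) + ⌊α * n⌋₊) / n) atTop (𝓝 0) := by
  have h1 : Tendsto (fun n : ℕ => Real.log (1 + α) / n + Real.log n / n) atTop (𝓝 0) := by
    have h2 : Tendsto (fun n : ℕ => Real.log (n : ℝ) / (n : ℝ)) atTop (𝓝 0) :=
      (Real.isLittleO_log_id_atTop.tendsto_div_nhds_zero).comp tendsto_natCast_atTop_atTop
    have h3 : Tendsto (fun n : ℕ => Real.log (1 + α) / (n : ℝ)) atTop (𝓝 0) :=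
      tendsto_const_nhds.div_atTop tendsto_natCast_atTop_atTop
    simpa using h3.add h2
  refine squeeze_zero' ?_ ?_ h1
  · filter_upwards [eventually_ge_atTop 1] with n hn
    have : (1 : ℝ) ≤ n := by exact_mod_cast hn
    have h3 : (0 : ℝ) ≤ ⌊α * n⌋₊ := by positivity
    exact div_nonneg (Real.log_nonneg (by linarith)) (by linarith)
  · filter_upwards [eventually_ge_atTop 1] with n hn
    have : (1 : ℝ) ≤ n := by exact_mod_cast hn
    have h3 : (⌊α * n⌋₊ : ℝ) ≤ α * n := Nat.floor_le (by positivity)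
    have h4 : (0 : ℝ) ≤ ⌊α * n⌋₊ := by positivity
    rw [← add_div, ← Real.log_mul (by positivity) (by positivity)]
    refine div_le_div_of_nonneg_right (Real.log_le_log (by linarith) (by linarith)) (by linarith)

lemma case_small {z : ℂ} (hz : z.im ≠ 0) (hz1 : ‖z‖ < 1) (ε : ℝ) (hε : 0 < ε) :
    ∃ (n : ℕ) (G : SimpleGraph (Fin n)), G.Connected ∧
        ∃ w : ℂ, ‖w - z‖ < ε ∧ connPoly G (w - 1) = 0 := by
  have hz0 : z ≠ 0 := by rintro rfl; simp at hz
  have hzone : z ≠ 1 := by rintro rfl; simp at hz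
  obtain ⟨a', ha'⟩ := pos_re (u := (z - 1) * z) (mul_ne_zero (sub_ne_zero.2 hzone) hz0) hz
  set a := a' + 1 with ha
  set h := a + 1 with hh
  have hpos : 0 < ((z - 1) * z ^ a).re := by
    have : (z - 1) * z ^ a = (z - 1) * z * z ^ a' := by rw [ha]; ring
    rwa [this]
  have hQ1 : 1 < ‖Q h a z‖ := by
    have e : Q h a z = 1 + (z - 1) * z ^ a := by rw [Q, hh]; ring
    have := Complex.re_le_norm (Q h a z)
    rw [e] at this ⊢
    rw [Complex.add_re, Complex.one_re] at this
    linarith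
  have hQ0 : Q h a z ≠ 0 := norm_pos_iff.1 (by linarith)
  have hzh : ‖z ^ h‖ < 1 := by
    rw [norm_pow]; exact pow_lt_one₀ (norm_nonneg _) hz1 (by omega)
  have hzh0 : z ^ h ≠ 0 := pow_ne_zero _ hz0
  have hl1 : 0 < Real.log ‖Q h a z‖ := Real.log_pos hQ1
  have hl2 : Real.log ‖z ^ h‖ < 0 := Real.log_neg (norm_pos_iff.2 hzh0) hzh
  set α := Real.log ‖Q h a z‖ / (-Real.log ‖z ^ h‖) with hα
  have hα0 : 0 < α := div_pos hl1 (by linarith)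
  set e : ℂ → ℂ := fun w => (1 - w ^ h) / (w - 1) with he
  have he_an : AnalyticAt ℂ e z := by
    have : z - 1 ≠ 0 := sub_ne_zero.2 hzone
    simp only [he]
    fun_prop (disch := assumption)
  have hc : e z ≠ 0 := by
    refine div_ne_zero ?_ (sub_ne_zero.2 hzone)
    intro h0
    rw [sub_eq_zero] at h0
    rw [← h0] at hzh
    simp at hzh
  have hcn : 0 < ‖e z‖ / 2 := by have := norm_pos_iff.2 hc; linarith
  obtain ⟨ρ, hρ0, hρ⟩ := Metric.eventually_nhds_iff_ball.1 (he_an.eventually_analyticAt.and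
    (Metric.continuousAt_iff'.1 he_an.continuousAt _ hcn))
  have hcore : ∃ n : ℕ, 1 ≤ n ∧ ∃ w, ‖w - z‖ < ε ∧
      Q h a w ^ n * (w ^ h) ^ ⌊α * n⌋₊ = (((n : ℝ) + ⌊α * n⌋₊ : ℝ) : ℂ) * e w := by
    refine core (f := Q h a) (g := fun w => w ^ h) (z := z) (Q_analytic h a z)
      (by fun_prop) hQ0 hzh0 α hα0 ?_ ?_ (fun n => (n : ℝ) + ⌊α * n⌋₊) ?_ (log_tendsto α hα0)
      (fun _ => e) (e z) hc ρ hρ0 (Eventually.of_forall fun n w hw => ?_) ε hε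
    · have h1 : α * (-Real.log ‖z ^ h‖) = Real.log ‖Q h a z‖ :=
        div_mul_cancel₀ _ (by linarith)
      show Real.log ‖Q h a z‖ + α * Real.log ‖z ^ h‖ = 0
      linarith
    · intro hcon
      have := nonconst h a (by omega) (by omega) (α * h) z ?_
      · have h2 : (h : ℂ) ≠ 0 := by exact_mod_cast (by omega : h ≠ 0)
        rw [mul_eq_zero] at this
        rcases this with h3 | h3
        · exact hα0.ne' (by exact_mod_cast h3)
        · exact h2 h3
      · filter_upwards [hcon, (Q_analytic h a z).continuousAt.eventually_ne hQ0,
          eventually_ne_nhds hz0] with w h1 h2 h3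
        rw [logDeriv_Q h a (by omega) (by omega) h3, logDeriv_pow_id] at h1
        field_simp at h1
        linear_combination h1
    · intro n hn
      have : (0 : ℝ) < n := by exact_mod_cast hn
      positivity
    · have := hρ w hw
      exact ⟨this.1.differentiableAt, by rw [← dist_eq_norm]; exact this.2.le⟩
  obtain ⟨n, hn, w, hw, heq⟩ := hcore
  obtain ⟨N, G, hG, hpoly⟩ := exists_graph 0 n ⌊α * n⌋₊ a h (by omega)
  refine ⟨N, G, hG, w, hw, ?_⟩
  rw [hpoly]
  change Q h a w ^ n * (w ^ h) ^ ⌊α * n⌋₊ = _ at heq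
  have hQw : w ^ h - w ^ a + 1 = Q h a w := rfl
  rw [hQw, heq]
  by_cases hw1 : w = 1
  · subst hw1
    simp
  · have : w - 1 ≠ 0 := sub_ne_zero.2 hw1
    simp only [he]
    push_cast
    field_simp
    ring

lemma case_large {z : ℂ} (hz : z.im ≠ 0) (hz1 : 1 < ‖z‖) (ε : ℝ) (hε : 0 < ε) :
    ∃ (n : ℕ) (G : SimpleGraph (Fin n)), G.Connected ∧
        ∃ w : ℂ, ‖w - z‖ < ε ∧ connPoly G (w - 1) = 0 := by
  have hz0 : z ≠ 0 := by rintro rfl; simp at hz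
  have hzone : z ≠ 1 := by rintro rfl; simp at hz
  have hzi : (z⁻¹).im ≠ 0 := by
    rw [Complex.inv_im]
    exact div_ne_zero (neg_ne_zero.2 hz) (fun h => hz0 (Complex.normSq_eq_zero.1 h))
  obtain ⟨b', hb'⟩ := pos_re (u := -z⁻¹) (neg_ne_zero.2 (inv_ne_zero hz0)) hzi
  set b := b' + 1 with hb
  have hpos : 1 < ‖1 - (z⁻¹) ^ b‖ := by
    have e : 1 - (z⁻¹) ^ b = 1 + -z⁻¹ * z⁻¹ ^ b' := by rw [hb]; ring
    have := Complex.re_le_norm (1 - (z⁻¹) ^ b)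
    rw [e] at this ⊢
    rw [Complex.add_re, Complex.one_re] at this
    linarith
  have hzin : ‖z⁻¹‖ < 1 := by rw [norm_inv]; exact inv_lt_one_of_one_lt₀ hz1
  have hlim : Tendsto (fun a : ℕ => ‖1 - (z⁻¹) ^ b + (z⁻¹) ^ (a + b)‖) atTop
      (𝓝 ‖1 - (z⁻¹) ^ b‖) := by
    have h1 : Tendsto (fun a : ℕ => (z⁻¹) ^ (a + b)) atTop (𝓝 0) :=
      (tendsto_pow_atTop_nhds_zero_of_norm_lt_one hzin).comp (tendsto_add_atTop_nat b)
    simpa using (h1.const_add (1 - (z⁻¹) ^ b)).norm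
  obtain ⟨a, haQ, ha1⟩ := ((hlim.eventually_const_lt hpos).and (eventually_ge_atTop 1)).exists
  set h := a + b with hh
  have hzh1 : 1 < ‖z ^ h‖ := by rw [norm_pow]; exact one_lt_pow₀ hz1 (by omega)
  have hzh0 : z ^ h ≠ 0 := pow_ne_zero _ hz0
  have hQz : ‖z ^ h‖ < ‖Q h a z‖ := by
    have e : Q h a z = z ^ h * (1 - (z⁻¹) ^ b + (z⁻¹) ^ h) := by
      rw [Q, hh, inv_pow, inv_pow, pow_add]
      field_simp
      try ring
    rw [e, norm_mul]
    exact lt_mul_of_one_lt_right (by linarith) haQ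
  have hQ0 : Q h a z ≠ 0 := norm_pos_iff.1 (by linarith)
  set f : ℂ → ℂ := fun w => w ^ h / Q h a w with hf
  have hQan := Q_analytic h a z
  have hfan : AnalyticAt ℂ f z := (analyticAt_id.pow h).div hQan hQ0
  have hf0 : f z ≠ 0 := div_ne_zero hzh0 hQ0
  have hf1 : ‖f z‖ < 1 := by
    simp only [hf, norm_div]
    rw [div_lt_one (by linarith)]
    exact hQz
  have hi1 : ‖(Q h a z)⁻¹‖ < 1 := by
    rw [norm_inv]; exact inv_lt_one_of_one_lt₀ (by linarith)
  have hl1 : Real.log ‖f z‖ < 0 := Real.log_neg (norm_pos_iff.2 hf0) hf1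
  have hl2 : 0 < Real.log ‖z‖ := Real.log_pos hz1
  set α := (-Real.log ‖f z‖) / Real.log ‖z‖ with hα
  have hα0 : 0 < α := div_pos (by linarith) hl2
  set d : ℂ → ℂ := fun w => -((w - 1) / w) with hd
  have hdc : ContinuousAt d z := by
    simp only [hd]
    fun_prop (disch := assumption)
  have hc : d z ≠ 0 := neg_ne_zero.2 (div_ne_zero (sub_ne_zero.2 hzone) hz0)
  have hcn : 0 < ‖d z‖ / 4 := by have := norm_pos_iff.2 hc; linarith
  set p : ℂ → ℂ := fun w => (w ^ h - 1) / w with hp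
  have hpc : ContinuousAt p z := by
    simp only [hp]
    fun_prop (disch := assumption)
  obtain ⟨q, hq, hq1⟩ := exists_between (max_lt hf1 hi1)
  have hqf : ‖f z‖ < q := (le_max_left _ _).trans_lt hq
  have hqi : ‖(Q h a z)⁻¹‖ < q := (le_max_right _ _).trans_lt hq
  have hq0 : 0 < q := (norm_nonneg _).trans_lt hqf
  obtain ⟨ρ, hρ0, hρ⟩ := Metric.eventually_nhds_iff_ball.1
    ((hfan.continuousAt.norm.eventually_lt_const hqf).and
    (((hQan.continuousAt.inv₀ hQ0).norm.eventually_lt_const hqi).and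
    ((Metric.continuousAt_iff'.1 hdc _ hcn).and
    ((hpc.norm.eventually_lt_const (lt_add_one _)).and
    ((hQan.continuousAt.eventually_ne hQ0).and (eventually_ne_nhds hz0))))))
  set E : ℕ → ℂ → ℂ := fun n w => f w ^ n + d w - n * p w * ((Q h a w)⁻¹) ^ n with hE
  have hsmall : Tendsto (fun n : ℕ => q ^ n + n * q ^ n * (‖p z‖ + 1)) atTop (𝓝 0) := by
    have h1 := tendsto_pow_atTop_nhds_zero_of_lt_one hq0.le hq1
    have h2 := tendsto_self_mul_const_pow_of_lt_one hq0.le hq1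
    simpa using h1.add (h2.mul_const (‖p z‖ + 1))
  have hcore : ∃ n : ℕ, 1 ≤ n ∧ ∃ w, ‖w - z‖ < min ε ρ ∧
      f w ^ n * w ^ ⌊α * n⌋₊ = ((1 : ℝ) : ℂ) * E n w := by
    refine core (f := f) (g := fun w => w) (z := z) hfan
      (by fun_prop) hf0 hz0 α hα0 ?_ ?_ (fun n => 1) (fun _ _ => one_pos) (by simp)
      E (d z) hc ρ hρ0 ?_ (min ε ρ) (lt_min hε hρ0)
    · have h1 : α * Real.log ‖z‖ = -Real.log ‖f z‖ := div_mul_cancel₀ _ hl2.ne'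
      show Real.log ‖f z‖ + α * Real.log ‖z‖ = 0
      linarith
    · intro hcon
      have := nonconst h a (by omega) (by omega) (-(h + α)) z ?_
      · rw [neg_eq_zero] at this
        have h2 : (h : ℝ) + α = 0 := by exact_mod_cast this
        have h3 : (0 : ℝ) ≤ h := by positivity
        linarith
      · filter_upwards [hcon, hQan.continuousAt.eventually_ne hQ0,
          eventually_ne_nhds hz0] with w h1 h2 h3
        have e1 : logDeriv f w = h / w - ((h : ℂ) * w ^ h - a * w ^ a) / (w * Q h a w) := by
          rw [hf, logDeriv_div (f := fun z : ℂ => z ^ h) (g := Q h a) w (pow_ne_zero _ h3) h2 (by fun_prop)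
            (Q_analytic h a w).differentiableAt, logDeriv_Q h a (by omega) ha1 h3, logDeriv_pow_id]
        have e2 : logDeriv (fun w : ℂ => w) w = 1 / w := by simp [logDeriv_apply]
        rw [e1, e2] at h1
        field_simp at h1
        linear_combination -h1
    · filter_upwards [hsmall.eventually_lt_const hcn] with n hn w hw
      obtain ⟨h1, h2, h3, h4, h5, h6⟩ := hρ w hw
      constructor
      · have hQd := (Q_analytic h a w).differentiableAt
        simp only [hE, hf, hd, hp]
        fun_prop (disch := assumption)
      · have e : E n w - d z = (f w ^ n - n * p w * ((Q h a w)⁻¹) ^ n) + (d w - d z) := by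
          simp only [hE]; ring
        rw [e]
        rw [dist_eq_norm] at h3
        have t1 : ‖f w ^ n‖ ≤ q ^ n := by rw [norm_pow]; gcongr
        have t2 : ‖n * p w * ((Q h a w)⁻¹) ^ n‖ ≤ n * q ^ n * (‖p z‖ + 1) := by
          rw [norm_mul, norm_mul, norm_pow, Complex.norm_natCast]
          have h2i : ‖(Q h a w)⁻¹‖ ≤ q := h2.le
          have h4i : ‖p w‖ ≤ ‖p z‖ + 1 := h4.le
          calc n * ‖p w‖ * ‖(Q h a w)⁻¹‖ ^ n ≤ n * (‖p z‖ + 1) * q ^ n := by gcongr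
            _ = _ := by ring
        have t3 := norm_add_le (f w ^ n - n * p w * ((Q h a w)⁻¹) ^ n) (d w - d z)
        have t4 := norm_sub_le (f w ^ n) (n * p w * ((Q h a w)⁻¹) ^ n)
        linarith
  obtain ⟨n, hn, w, hw, heq⟩ := hcore
  obtain ⟨N, G, hG, hpoly⟩ := exists_graph ⌊α * n⌋₊ n 0 a h (by omega)
  refine ⟨N, G, hG, w, hw.trans_le (min_le_left _ _), ?_⟩
  rw [hpoly]
  have hwρ := hρ w (by rw [mem_ball, dist_eq_norm]; exact hw.trans_le (min_le_right _ _))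
  obtain ⟨-, -, -, -, hQw, hw0⟩ := hwρ
  have hQw' : w ^ h - w ^ a + 1 = Q h a w := rfl
  rw [hQw']
  simp only [hf, hE, hd, hp] at heq
  have hQn : Q h a w ^ n ≠ 0 := pow_ne_zero _ hQw
  rw [div_pow, inv_pow] at heq
  field_simp at heq
  have e1 : w ^ (1 + (n + 0) * h) = w * (w ^ h) ^ n := by
    rw [pow_add, add_zero, mul_comm n h, pow_mul, pow_one]
  rw [e1]
  push_cast at heq ⊢
  rw [← pow_mul] at *
  linear_combination heq

lemma generic_point (z : ℂ) (ε : ℝ) (hε : 0 < ε) :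
    ∃ y : ℂ, ‖y - z‖ < ε ∧ y.im ≠ 0 ∧ ‖y‖ ≠ 1 := by
  obtain ⟨t, ht, htn⟩ := (Set.Ioo_infinite (show z.im < z.im + ε by linarith)).exists_notMem_finset
    {0, √(1 - z.re ^ 2), -√(1 - z.re ^ 2)}
  simp only [Finset.mem_insert, Finset.mem_singleton, not_or] at htn
  refine ⟨⟨z.re, t⟩, ?_, htn.1, ?_⟩
  · have e : (⟨z.re, t⟩ : ℂ) - z = ((t - z.im : ℝ) : ℂ) * Complex.I := by
      apply Complex.ext <;> simp
    rw [e, norm_mul, Complex.norm_I, mul_one, Complex.norm_real, Real.norm_eq_abs,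
      abs_of_pos (by linarith [ht.1])]
    linarith [ht.2]
  · intro h1
    have h2 : z.re * z.re + t * t = 1 := by
      have := Complex.normSq_eq_norm_sq (⟨z.re, t⟩ : ℂ)
      rw [h1, Complex.normSq_mk] at this
      linarith
    have h3 : √(1 - z.re ^ 2) = |t| := by
      rw [← Real.sqrt_sq_eq_abs]
      congr 1
      linarith
    rw [h3] at htn
    rcases abs_choice t with h | h
    · exact htn.2.1 h.symm
    · exact htn.2.2 (by rw [h]; ring)

end CPD

/-- The roots of connected set polynomials of connected finite simple graphs are dense in
the complex plane. -/
theorem connPoly_roots_dense :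
    ∀ (z : ℂ) (ε : ℝ), 0 < ε →
      ∃ (n : ℕ) (G : SimpleGraph (Fin n)), G.Connected ∧
        ∃ w : ℂ, ‖w - z‖ < ε ∧ connPoly G w = 0 := by
  intro z ε hε
  obtain ⟨y, hy, him, hn⟩ := CPD.generic_point (z + 1) (ε / 2) (by positivity)
  have key : ∃ (n : ℕ) (G : SimpleGraph (Fin n)), G.Connected ∧
        ∃ w : ℂ, ‖w - y‖ < ε / 2 ∧ connPoly G (w - 1) = 0 := by
    rcases lt_or_gt_of_ne hn with h | h
    · exact CPD.case_small him h _ (by positivity)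
    · exact CPD.case_large him h _ (by positivity)
  obtain ⟨n, G, hG, w, hw, h0⟩ := key
  refine ⟨n, G, hG, w - 1, ?_, h0⟩
  have e : w - 1 - z = (w - y) + (y - (z + 1)) := by ring
  rw [e]
  have := norm_add_le (w - y) (y - (z + 1))
  linarith
end

section
/- Let G be a finite simple graph on n_G vertices and H a finite simple graph on n_H vertices, and let G·H denote their lexicographic product. Then the connected set polynomials satisfy C(G·H; x) = C(G; (x+1)^{n_H} − 1) + n_G·[ C(H; x) − (x+1)^{n_H} + 1 ] as polynomials (equivalently, for all complex x). -/
open scoped Classical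

/-- The lexicographic product of two simple graphs: `(u,x)` and `(v,y)` are adjacent iff
`u ~ v` in `G`, or `u = v` and `x ~ y` in `H`. -/
def lexProd {α β : Type*} (G : SimpleGraph α) (H : SimpleGraph β) :
    SimpleGraph (α × β) where
  Adj p q := G.Adj p.1 q.1 ∨ (p.1 = q.1 ∧ H.Adj p.2 q.2)
  symm := by
    refine ⟨?_⟩
    rintro p q (h | ⟨h1, h2⟩)
    · exact Or.inl h.symm
    · exact Or.inr ⟨h1.symm, h2.symm⟩
  loopless := by
    refine ⟨?_⟩
    rintro p (h | ⟨-, h⟩)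
    · exact G.loopless.irrefl _ h
    · exact H.loopless.irrefl _ h


lemma connPoly_eq_sum {V : Type*} [Fintype V] (G : SimpleGraph V) (x : ℂ) :
    connPoly G x =
      ∑ S : Finset V, if (G.induce (S : Set V)).Connected then x ^ S.card else 0 := by
  unfold connPoly connCount
  rw [← Finset.sum_filter]
  have hm : ∀ S ∈ Finset.univ.filter (fun S : Finset V => (G.induce (S : Set V)).Connected),
      S.card ∈ Finset.Icc 1 (Fintype.card V) := by
    intro S hS
    rw [Finset.mem_filter] at hS
    obtain ⟨v⟩ := hS.2.nonempty
    rw [Finset.mem_Icc]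
    exact ⟨Finset.card_pos.mpr ⟨v.1, v.2⟩, Finset.card_le_univ S⟩
  rw [← Finset.sum_fiberwise_of_maps_to hm]
  refine Finset.sum_congr rfl fun k _ => ?_
  rw [Finset.sum_congr rfl (g := fun _ => x ^ k)
    (fun S hS => by rw [(Finset.mem_filter.mp hS).2])]
  rw [Finset.sum_const, nsmul_eq_mul, Finset.filter_filter]
  simp only [and_comm]

lemma fiber_sum {α β : Type*} [Fintype α] [Fintype β] (T : Finset α) (x : ℂ) :
    ∑ S : Finset (α × β) with S.image Prod.fst = T, x ^ S.card =
      ((x + 1) ^ Fintype.card β - 1) ^ T.card := by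
  have hne : ∑ s : Finset β with s.Nonempty, x ^ s.card = (x + 1) ^ Fintype.card β - 1 := by
    have h1 : ∑ s : Finset β, x ^ s.card = (x + 1) ^ Fintype.card β := by
      have := Finset.sum_pow_mul_eq_add_pow x 1 (Finset.univ : Finset β)
      simpa using this
    have h2 := Finset.sum_filter_add_sum_filter_not (Finset.univ : Finset (Finset β))
      (fun s => s.Nonempty) (fun s => x ^ s.card)
    have h3 : (Finset.univ : Finset (Finset β)).filter (fun s => ¬ s.Nonempty) = {∅} := by
      ext s; simp [Finset.not_nonempty_iff_eq_empty]
    rw [h3, h1, Finset.sum_singleton] at h2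
    simp at h2
    rw [← h2]; ring
  let t : α → Finset (Finset β) := fun a =>
    if a ∈ T then Finset.univ.filter (fun s => s.Nonempty) else {∅}
  have key := Finset.prod_univ_sum t (fun _ s => x ^ s.card)
  have hL : ∏ a, ∑ s ∈ t a, x ^ s.card = ((x + 1) ^ Fintype.card β - 1) ^ T.card := by
    have : ∀ a, ∑ s ∈ t a, x ^ s.card =
        if a ∈ T then ((x + 1) ^ Fintype.card β - 1) else 1 := by
      intro a
      by_cases h : a ∈ T <;> simp [t, h, hne]
    simp only [this]
    rw [Finset.prod_ite]
    simp
  rw [← hL, key]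
  refine Finset.sum_bij' (fun S _ a => Finset.univ.filter (fun b => (a, b) ∈ S))
    (fun f _ => Finset.univ.filter (fun p : α × β => p.2 ∈ f p.1)) ?_ ?_ ?_ ?_ ?_
  · intro S hS
    obtain ⟨-, rfl⟩ := Finset.mem_filter.mp hS
    rw [Fintype.mem_piFinset]
    intro a
    by_cases h : a ∈ S.image Prod.fst
    · simp only [t, if_pos h, Finset.mem_filter, Finset.mem_univ, true_and]
      obtain ⟨⟨a', b⟩, hp, rfl⟩ := Finset.mem_image.mp h
      exact ⟨b, by simpa using hp⟩
    · simp only [t, if_neg h, Finset.mem_singleton]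
      ext b
      simp only [Finset.mem_filter, Finset.mem_univ, true_and, Finset.notMem_empty, iff_false]
      exact fun hb => h (Finset.mem_image.mpr ⟨_, hb, rfl⟩)
  · intro f hf
    rw [Fintype.mem_piFinset] at hf
    simp only [Finset.mem_filter, Finset.mem_univ, true_and]
    ext a
    have ha := hf a
    by_cases h : a ∈ T
    · simp only [t, if_pos h, Finset.mem_filter, Finset.mem_univ, true_and] at ha
      obtain ⟨b, hb⟩ := ha
      simp only [h, iff_true]
      exact Finset.mem_image.mpr ⟨(a, b), by simpa using hb, rfl⟩
    · simp only [t, if_neg h, Finset.mem_singleton] at ha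
      simp [h, ha]
  · intro S _
    ext p; simp
  · intro f _
    ext a b; simp
  · intro S _
    rw [Finset.prod_pow_eq_pow_sum]
    congr 1
    rw [Finset.card_eq_sum_card_fiberwise (f := Prod.fst) (t := Finset.univ)
      (fun _ _ => Finset.mem_coe.mpr (Finset.mem_univ _))]
    refine Finset.sum_congr rfl fun a _ => ?_
    refine Finset.card_bij' (fun p _ => p.2) (fun b _ => (a, b)) ?_ ?_ ?_ ?_
    · rintro ⟨a', b⟩ h
      obtain ⟨h, rfl⟩ := Finset.mem_filter.mp h
      simpa using h
    · intro b h; simpa using h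
    · rintro ⟨a', b⟩ h
      obtain ⟨h, rfl⟩ := Finset.mem_filter.mp h
      rfl
    · intro b h; rfl

lemma conn_iff {α β : Type*} (G : SimpleGraph α) (H : SimpleGraph β)
    (S : Finset (α × β)) (T : Finset α) (hT : S.image Prod.fst = T) (h1 : T.card ≠ 1) :
    ((lexProd G H).induce (S : Set (α × β))).Connected ↔
      (G.induce (T : Set α)).Connected := by
  have hmem : ∀ p ∈ S, p.1 ∈ T := fun p hp => hT ▸ Finset.mem_image.mpr ⟨p, hp, rfl⟩
  have hlift : ∀ a ∈ T, ∃ p ∈ S, p.1 = a := fun a ha => by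
    rw [← hT] at ha; exact Finset.mem_image.mp ha
  constructor
  · intro h
    obtain ⟨v⟩ := h.nonempty
    have : Nonempty (T : Set α) := ⟨⟨v.1.1, hmem _ v.2⟩⟩
    have hw : ∀ (p q : (S : Set (α × β)))
        (_ : ((lexProd G H).induce (S : Set (α × β))).Walk p q),
        (G.induce (T : Set α)).Reachable ⟨p.1.1, hmem _ p.2⟩ ⟨q.1.1, hmem _ q.2⟩ := by
      intro p q w
      induction w with
      | nil => exact SimpleGraph.Reachable.refl _
      | @cons u v w hadj _ ih =>
        have hadj' : G.Adj u.1.1 v.1.1 ∨ (u.1.1 = v.1.1 ∧ H.Adj u.1.2 v.1.2) := hadj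
        rcases hadj' with h | ⟨h, -⟩
        · refine SimpleGraph.Reachable.trans (SimpleGraph.Adj.reachable ?_) ih
          exact h
        · have : (⟨u.1.1, hmem _ u.2⟩ : (T : Set α)) = ⟨v.1.1, hmem _ v.2⟩ := Subtype.ext h
          rw [this]; exact ih
    refine SimpleGraph.Connected.mk ?_
    rintro ⟨a, ha⟩ ⟨b, hb⟩
    obtain ⟨p, hp, rfl⟩ := hlift a ha
    obtain ⟨q, hq, rfl⟩ := hlift b hb
    obtain ⟨w⟩ := h.preconnected ⟨p, hp⟩ ⟨q, hq⟩
    exact hw _ _ w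
  · intro h
    obtain ⟨v⟩ := h.nonempty
    obtain ⟨p0, hp0, -⟩ := hlift v.1 v.2
    have : Nonempty (S : Set (α × β)) := ⟨⟨p0, hp0⟩⟩
    have hnt : Nontrivial (T : Set α) := by
      have : 1 < T.card := by
        have := Finset.card_pos.mpr ⟨v.1, v.2⟩
        omega
      exact Set.nontrivial_coe_sort.mpr (Finset.one_lt_card_iff_nontrivial.mp this)
    have hw : ∀ (a b : (T : Set α)) (_ : (G.induce (T : Set α)).Walk a b)
        (p q : (S : Set (α × β))), p.1.1 = a.1 → q.1.1 = b.1 →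
        ((lexProd G H).induce (S : Set (α × β))).Reachable p q := by
      intro a b w
      induction w with
      | @nil u =>
        intro p q hp hq
        obtain ⟨c, hc⟩ := h.preconnected.exists_adj_of_nontrivial u
        obtain ⟨r, hr, hrc⟩ := hlift c.1 c.2
        have hc' : G.Adj u.1 c.1 := hc
        have a1 : ((lexProd G H).induce (S : Set (α × β))).Adj p ⟨r, hr⟩ := by
          refine Or.inl ?_
          change G.Adj p.1.1 r.1
          rw [hp, hrc]; exact hc'
        have a2 : ((lexProd G H).induce (S : Set (α × β))).Adj ⟨r, hr⟩ q := by
          refine Or.inl ?_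
          change G.Adj r.1 q.1.1
          rw [hq, hrc]; exact hc'.symm
        exact a1.reachable.trans a2.reachable
      | @cons u v w hadj _ ih =>
        intro p q hp hq
        obtain ⟨r, hr, hrc⟩ := hlift v.1 v.2
        have hc' : G.Adj u.1 v.1 := hadj
        have a1 : ((lexProd G H).induce (S : Set (α × β))).Adj p ⟨r, hr⟩ := by
          refine Or.inl ?_
          change G.Adj p.1.1 r.1
          rw [hp, hrc]; exact hc'
        exact a1.reachable.trans (ih ⟨r, hr⟩ q hrc hq)
    refine SimpleGraph.Connected.mk ?_
    intro p q
    obtain ⟨w⟩ := h.preconnected ⟨p.1.1, hmem _ p.2⟩ ⟨q.1.1, hmem _ q.2⟩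
    exact hw _ _ w p q rfl rfl

lemma conn_fiber {α β : Type*} (G : SimpleGraph α) (H : SimpleGraph β) (a : α)
    (s : Finset β) :
    ((lexProd G H).induce ((s.image (Prod.mk a) : Finset (α × β)) : Set (α × β))).Connected ↔
      (H.induce (s : Set β)).Connected := by
  symm
  refine SimpleGraph.Iso.connected_iff ⟨⟨fun b => ⟨(a, b.1), by simpa using b.2⟩,
    fun p => ⟨p.1.2, ?_⟩, ?_, ?_⟩, ?_⟩
  · obtain ⟨b, hb, h⟩ := Finset.mem_image.mp (Finset.mem_coe.mp p.2)
    rw [← h]; exact hb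
  · intro b; rfl
  · rintro ⟨p, hp⟩
    obtain ⟨b, hb, rfl⟩ := Finset.mem_image.mp (Finset.mem_coe.mp hp)
    rfl
  · intro b c
    change (G.Adj a a ∨ (a = a ∧ H.Adj b.1 c.1)) ↔ H.Adj b.1 c.1
    simp

lemma singleton_sum {α β : Type*} [Fintype α] [Fintype β] (G : SimpleGraph α)
    (H : SimpleGraph β) (a : α) (x : ℂ) :
    (∑ S : Finset (α × β) with S.image Prod.fst = {a},
      if ((lexProd G H).induce (S : Set (α × β))).Connected then x ^ S.card else 0) =
      connPoly H x := by
  rw [connPoly_eq_sum, ← Finset.sum_filter, ← Finset.sum_filter]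
  symm
  refine Finset.sum_bij (fun s _ => s.image (Prod.mk a)) ?_ ?_ ?_ ?_
  · intro s hs
    have hs := (Finset.mem_filter.mp hs).2
    obtain ⟨b⟩ := hs.nonempty
    simp only [Finset.mem_filter, Finset.mem_univ, true_and]
    refine ⟨?_, (conn_fiber G H a s).mpr hs⟩
    rw [Finset.image_image]
    exact Finset.image_const ⟨b.1, b.2⟩ a
  · intro s _ t _ h
    exact Finset.image_injective (Prod.mk_right_injective a) h
  · intro S hS
    simp only [Finset.mem_filter, Finset.mem_univ, true_and] at hS
    have hS' : (S.image Prod.snd).image (Prod.mk a) = S := by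
      rw [Finset.image_image]
      conv_rhs => rw [← Finset.image_id (s := S)]
      refine Finset.image_congr fun p hp => ?_
      have : p.1 ∈ S.image Prod.fst := Finset.mem_image.mpr ⟨p, hp, rfl⟩
      rw [hS.1, Finset.mem_singleton] at this
      exact Prod.ext this.symm rfl
    refine ⟨S.image Prod.snd, ?_, hS'⟩
    simp only [Finset.mem_filter, Finset.mem_univ, true_and]
    rw [← conn_fiber G H a, hS']
    exact hS.2
  · intro s _
    rw [Finset.card_image_of_injective _ (Prod.mk_right_injective a)]

/-- The connected set polynomial of a lexicographic product:
`C(G*H;x) = C(G;(x+1)^(n_H)-1) + n_G * (C(H;x) - (x+1)^(n_H) + 1)`. -/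
theorem connPoly_lexProd {α β : Type*} [Fintype α] [Fintype β]
    (G : SimpleGraph α) (H : SimpleGraph β) (x : ℂ) :
    connPoly (lexProd G H) x =
      connPoly G ((x + 1) ^ (Fintype.card β) - 1) +
        (Fintype.card α : ℂ) *
          (connPoly H x - (x + 1) ^ (Fintype.card β) + 1) := by
  set y : ℂ := (x + 1) ^ (Fintype.card β) - 1 with hy
  have key : ∀ T : Finset α, (∑ S : Finset (α × β) with S.image Prod.fst = T,
      if ((lexProd G H).induce (S : Set (α × β))).Connected then x ^ S.card else 0) =
      (if (G.induce (T : Set α)).Connected then y ^ T.card else 0) +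
        (if T.card = 1 then connPoly H x - y else 0) := by
    intro T
    by_cases h1 : T.card = 1
    · obtain ⟨a, rfl⟩ := Finset.card_eq_one.mp h1
      rw [singleton_sum, if_pos h1, if_pos, h1]
      · ring
      · have : Subsingleton (({a} : Finset α) : Set α) := by
          rw [Finset.coe_singleton]; infer_instance
        have : Nonempty (({a} : Finset α) : Set α) := ⟨⟨a, by simp⟩⟩
        exact SimpleGraph.Connected.mk SimpleGraph.Preconnected.of_subsingleton
    · rw [if_neg h1, add_zero, hy, ← fiber_sum T x]
      by_cases hc : (G.induce (T : Set α)).Connected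
      · rw [if_pos hc]
        refine Finset.sum_congr rfl fun S hS => ?_
        rw [if_pos ((conn_iff G H S T (Finset.mem_filter.mp hS).2 h1).mpr hc)]
      · rw [if_neg hc]
        refine Finset.sum_eq_zero fun S hS => ?_
        rw [if_neg fun h => hc ((conn_iff G H S T (Finset.mem_filter.mp hS).2 h1).mp h)]
  have hcount : ∑ T : Finset α, (if T.card = 1 then connPoly H x - y else 0) =
      (Fintype.card α : ℂ) * (connPoly H x - y) := by
    rw [← Finset.sum_filter, Finset.sum_const, nsmul_eq_mul]
    congr 2
    have : (Finset.univ : Finset (Finset α)).filter (fun T => T.card = 1) =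
        Finset.powersetCard 1 Finset.univ := by
      ext T; simp [Finset.mem_powersetCard]
    rw [this, Finset.card_powersetCard, Nat.choose_one_right, Finset.card_univ]
  have hf : ∑ T : Finset α, (∑ S : Finset (α × β) with S.image Prod.fst = T,
      if ((lexProd G H).induce (S : Set (α × β))).Connected then x ^ S.card else 0) =
      ∑ S : Finset (α × β),
      if ((lexProd G H).induce (S : Set (α × β))).Connected then x ^ S.card else 0 := by
    convert Finset.sum_fiberwise (Finset.univ : Finset (Finset (α × β)))
      (fun S => S.image Prod.fst) (fun S => if ((lexProd G H).induce
        (S : Set (α × β))).Connected then x ^ S.card else 0)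
  have e1 : connPoly (lexProd G H) x = ∑ S : Finset (α × β),
      if ((lexProd G H).induce (S : Set (α × β))).Connected then x ^ S.card else 0 := by
    convert connPoly_eq_sum (lexProd G H) x
  have e2 : connPoly G y = ∑ T : Finset α,
      if (G.induce (T : Set α)).Connected then y ^ T.card else 0 := by
    convert connPoly_eq_sum G y
  rw [e1, e2, ← hf, Finset.sum_congr rfl (fun T _ => key T), Finset.sum_add_distrib, hcount, hy]
  ring
end

section
/- For the complete bipartite graph K_{n,n} (n ≥ 1) and every real or complex p, the node reliability polynomial satisfies NRel(K_{n,n}; p) = 2np(1−p)^{2n−1} + (1 − (1−p)^n)². -/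
open scoped Classical

/-- The node reliability polynomial of `G` at a complex argument `p`: the sum over all
connected sets `S` of `p^|S| * (1-p)^(N-|S|)`. -/
noncomputable def nodeRelC {V : Type*} [Fintype V] (G : SimpleGraph V) (p : ℂ) : ℂ :=
  ∑ S ∈ Finset.univ.filter fun S : Finset V => (G.induce (S : Set V)).Connected,
    p ^ S.card * (1 - p) ^ (Fintype.card V - S.card)


theorem conn_iff_aux (n : ℕ) (S : Finset (Fin n ⊕ Fin n)) :
    ((completeBipartiteGraph (Fin n) (Fin n)).induce (S : Set (Fin n ⊕ Fin n))).Connected ↔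
      (S.toLeft.Nonempty ∧ S.toRight.Nonempty) ∨ S.card = 1 := by
  constructor
  · intro h
    by_cases hAB : S.toLeft.Nonempty ∧ S.toRight.Nonempty
    · exact Or.inl hAB
    right
    have hbot : (completeBipartiteGraph (Fin n) (Fin n)).induce (S : Set (Fin n ⊕ Fin n)) = ⊥ := by
      ext ⟨x, hx⟩ ⟨y, hy⟩
      simp only [SimpleGraph.comap_adj, SimpleGraph.bot_adj, iff_false]
      intro hadj
      apply hAB
      rcases x with x | x <;> rcases y with y | y <;> simp at hadj
      · exact ⟨⟨x, by simpa using hx⟩, ⟨y, by simpa using hy⟩⟩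
      · exact ⟨⟨y, by simpa using hy⟩, ⟨x, by simpa using hx⟩⟩
    rw [hbot] at h
    have hs := SimpleGraph.preconnected_bot_iff_subsingleton.1 h.preconnected
    obtain ⟨⟨x, hx⟩⟩ := h.nonempty
    rw [Finset.card_eq_one]
    refine ⟨x, Finset.eq_singleton_iff_unique_mem.2 ⟨hx, fun y hy => ?_⟩⟩
    exact congrArg Subtype.val (hs.elim ⟨y, hy⟩ ⟨x, hx⟩)
  · rintro (⟨⟨a, ha⟩, ⟨b, hb⟩⟩ | h)
    · rw [Finset.mem_toLeft] at ha
      rw [Finset.mem_toRight] at hb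
      rw [SimpleGraph.connected_iff_exists_forall_reachable]
      refine ⟨⟨Sum.inl a, ha⟩, ?_⟩
      rintro ⟨x | x, hx⟩
      · refine SimpleGraph.Reachable.trans (v := ⟨Sum.inr b, hb⟩) ?_ ?_ <;>
          exact SimpleGraph.Adj.reachable (by simp)
      · exact SimpleGraph.Adj.reachable (by simp)
    · obtain ⟨x, rfl⟩ := Finset.card_eq_one.1 h
      rw [SimpleGraph.connected_iff_exists_forall_reachable]
      refine ⟨⟨x, by simp⟩, ?_⟩
      rintro ⟨y, hy⟩
      have : y = x := by simpa using hy
      subst this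
      exact SimpleGraph.Reachable.refl _

theorem side_sum_aux (n : ℕ) (p : ℂ) :
    ∑ A ∈ Finset.univ.filter (fun A : Finset (Fin n) => A.Nonempty),
      p ^ A.card * (1 - p) ^ (n - A.card) = 1 - (1 - p) ^ n := by
  have h := Fintype.sum_pow_mul_eq_add_pow (Fin n) p (1 - p)
  have h2 := Finset.sum_filter_add_sum_filter_not Finset.univ
    (fun A : Finset (Fin n) => A.Nonempty) (fun A => p ^ A.card * (1 - p) ^ (n - A.card))
  have h3 : Finset.univ.filter (fun A : Finset (Fin n) => ¬ A.Nonempty) = {∅} := by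
    ext A; simp
  rw [h3] at h2
  simp only [Fintype.card_fin] at h
  rw [h] at h2
  simp at h2
  linear_combination h2

/-- The node reliability polynomial of the complete bipartite graph K_{n,n} is
`2np(1-p)^(2n-1) + (1-(1-p)^n)^2`. -/
theorem nodeRel_completeBipartite (n : ℕ) (hn : 1 ≤ n) (p : ℂ) :
    nodeRelC (completeBipartiteGraph (Fin n) (Fin n)) p =
      2 * n * p * (1 - p) ^ (2 * n - 1) + (1 - (1 - p) ^ n) ^ 2 := by
  unfold nodeRelC
  simp only [conn_iff_aux]
  rw [Finset.filter_or, Finset.sum_union, add_comm]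
  · congr 1
    · rw [Finset.sum_congr rfl (g := fun _ => p * (1 - p) ^ (2 * n - 1))]
      · have : (Finset.univ.filter fun S : Finset (Fin n ⊕ Fin n) => S.card = 1)
            = Finset.powersetCard 1 Finset.univ := by
          ext S; simp [Finset.mem_powersetCard]
        rw [Finset.sum_const, this, Finset.card_powersetCard]
        simp
        ring
      · intro S hS
        have : S.card = 1 := by simpa using hS
        simp [this, two_mul]
    · rw [← side_sum_aux, sq, Finset.sum_mul_sum, ← Finset.sum_product']
      refine Finset.sum_bij' (fun S _ => (S.toLeft, S.toRight))
        (fun AB _ => AB.1.disjSum AB.2) ?_ ?_ ?_ ?_ ?_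
      · intro S hS
        simpa using hS
      · intro AB h
        simpa using h
      · intro S _
        ext (x | x) <;> simp
      · intro AB _
        simp
      · intro S _
        have h := S.card_toLeft_add_card_toRight
        have h1 : S.toLeft.card ≤ n := by simpa using Finset.card_le_univ S.toLeft
        have h2 : S.toRight.card ≤ n := by simpa using Finset.card_le_univ S.toRight
        have h3 : Fintype.card (Fin n ⊕ Fin n) - S.card
            = (n - S.toLeft.card) + (n - S.toRight.card) := by
          simp only [Fintype.card_sum, Fintype.card_fin]; omega
        rw [h3, ← h, pow_add, pow_add]
        ring
  · rw [Finset.disjoint_left]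
    intro S h1 h2
    simp only [Finset.mem_filter, Finset.mem_univ, true_and] at h1 h2
    have h := S.card_toLeft_add_card_toRight
    have := h1.1.card_pos
    have := h1.2.card_pos
    omega
end
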